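/- arXiv:math/0409554 — 3 statements merged into one kernel-verified Lean document; each statement's English description precedes it below -/
import Mathlib

section
/- Fix integers 1 ≤ p ≤ q and a real number s. For each integer n large enough, let x_n > 0 be the unique positive solution of n − p = x_n + s√(2x_n), and let μ_n = (n−p)^p with H_n the corresponding strip hook product. Then lim_{n→∞} (2x_n)^{−p(q−p)/2} · E_{x_n, p}( 1_{λ⊇μ_n} · H_n(λ) ) = [ ∫_{[s,∞)^p} Δ_p(ξ)² ∏_{i=1}^p (ξ_i − s)^{q−p} e^{−ξ_i²} dξ ] / [ ∫_{ℝ^p} Δ_p(ξ)² ∏_{i=1}^p e^{−ξ_i²} dξ ]. -/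
open MeasureTheory Filter Real
open scoped BigOperators Topology

noncomputable section

/-- Hook length of the (0-indexed) cell `c` in the Young diagram `μ`. -/
def hookLen (μ : YoungDiagram) (c : ℕ × ℕ) : ℕ :=
  μ.rowLen c.1 + μ.colLen c.2 - c.1 - c.2 - 1

/-- Product of all hook lengths of `μ`. -/
def hookProd (μ : YoungDiagram) : ℕ := ∏ c ∈ μ.cells, hookLen μ c

/-- Number of semistandard Young tableaux of shape `μ` with entries in `{0, …, q-1}`. -/
def numSSYT (μ : YoungDiagram) (q : ℕ) : ℕ :=
  Set.ncard {T : SemistandardYoungTableau μ | ∀ c ∈ μ.cells, T c.1 c.2 < q}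

/-- Number of standard Young tableaux of shape `μ`, via the hook length formula. -/
def fSYT (μ : YoungDiagram) : ℝ := (Nat.factorial μ.card : ℝ) / (hookProd μ : ℝ)

/-- The probability `P^{ℓ,p}` of a partition `μ` of `ℓ`. -/
def Pword (ℓ p : ℕ) (μ : YoungDiagram) : ℝ :=
  fSYT μ * (numSSYT μ p : ℝ) / (p : ℝ) ^ ℓ

/-- The expectation `E^{ℓ,p}` of a function `g` of the partition. -/
def Eword (ℓ p : ℕ) (g : YoungDiagram → ℝ) : ℝ :=
  ∑' μ : YoungDiagram, if μ.card = ℓ then Pword ℓ p μ * g μ else 0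

/-- The expectation `E_{x,p}` with respect to the Poissonized measure `P_{x,p}`. -/
def Epois (x : ℝ) (p : ℕ) (g : YoungDiagram → ℝ) : ℝ :=
  ∑' μ : YoungDiagram,
    Real.exp (-(p * x)) * (p * x) ^ μ.card / (Nat.factorial μ.card : ℝ) *
      Pword μ.card p μ * g μ

/-- Pochhammer symbol `(x)_m = x (x+1) ⋯ (x+m-1)`. -/
def pochRe (x : ℝ) (m : ℕ) : ℝ := ∏ j ∈ Finset.range m, (x + j)

/-- `(x)_κ = ∏_i (x + 1 - i)_{κ_i}` (with `i` 1-indexed). -/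
def pochPart (x : ℝ) (μ : YoungDiagram) : ℝ :=
  ∏ i ∈ Finset.range (μ.colLen 0), pochRe (x - i) (μ.rowLen i)

/-- Strip hook product `H(λ) = ∏_{(i,j) ∈ λ, n-q < j ≤ n-p} h^λ_{ij}` (1-indexed `j`). -/
def Hstrip (n p q : ℕ) (μ : YoungDiagram) : ℕ :=
  ∏ c ∈ μ.cells.filter (fun c => n - q ≤ c.2 ∧ c.2 < n - p), hookLen μ c

/-- The indicator `1_{λ ⊇ (n-p)^p}`. -/
def indSup (n p : ℕ) (μ : YoungDiagram) : ℝ :=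
  if ∀ i < p, n - p ≤ μ.rowLen i then 1 else 0

/-- Vandermonde determinant `Δ_p(x) = ∏_{i<j} (x_i - x_j)`. -/
def vdm {p : ℕ} (x : Fin p → ℝ) : ℝ :=
  ∏ i : Fin p, ∏ j ∈ Finset.Ioi i, (x i - x j)

def diagB {p : ℕ} (b : Fin p → ℕ) : YoungDiagram where
  cells := (Finset.range p ×ˢ Finset.range (∑ i, b i)).filter
    (fun c => ∀ i : Fin p, p ≤ c.1 + i + 1 → c.2 + i < b i)
  isLowerSet := by
    rintro ⟨k, j⟩ ⟨k', j'⟩ hle hm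
    simp only [Prod.mk_le_mk] at hle
    simp only [Finset.coe_filter, Finset.mem_product, Finset.mem_range, Set.mem_ofPred_eq] at hm ⊢
    refine ⟨⟨by omega, by omega⟩, fun i hi => ?_⟩
    have := hm.2 i (by omega)
    omega

lemma mem_diagB {p : ℕ} (b : Fin p → ℕ) (k j : ℕ) :
    (k, j) ∈ diagB b ↔ k < p ∧ ∀ i : Fin p, p ≤ k + i + 1 → j + i < b i := by
  rw [← YoungDiagram.mem_cells]
  simp only [diagB, Finset.mem_filter, Finset.mem_product, Finset.mem_range]
  refine ⟨fun h => ⟨h.1.1, h.2⟩, fun h => ⟨⟨h.1, ?_⟩, h.2⟩⟩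
  have h1 := h.2 ⟨p - 1, by omega⟩ (by simp only; omega)
  have h2 : b ⟨p - 1, by omega⟩ ≤ ∑ i, b i :=
    Finset.single_le_sum (f := b) (fun i _ => Nat.zero_le _) (Finset.mem_univ _)
  omega

lemma strictMono_sub {p : ℕ} {b : Fin p → ℕ} (hb : StrictMono b) {i j : Fin p} (hij : i ≤ j) :
    b i + (j - i : ℕ) ≤ b j := by
  obtain ⟨i, hi⟩ := i
  obtain ⟨j, hj⟩ := j
  simp only [Fin.mk_le_mk] at hij
  induction j, hij using Nat.le_induction with
  | base => simp
  | succ j hij ih =>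
    have h1 := ih (by omega)
    have h2 : b ⟨j, by omega⟩ < b ⟨j + 1, hj⟩ := hb (by simp)
    simp only at h1 ⊢
    omega

lemma mem_diagB' {p : ℕ} {b : Fin p → ℕ} (hb : StrictMono b) (i : Fin p) (j : ℕ) :
    (p - 1 - i, j) ∈ diagB b ↔ j + i < b i := by
  rw [mem_diagB]
  constructor
  · intro h
    exact h.2 i (by omega)
  · intro h
    refine ⟨by omega, fun i' hi' => ?_⟩
    have := strictMono_sub hb (i := i) (j := i') (by rw [Fin.le_def]; omega)
    have : (i : ℕ) ≤ i' := by omega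
    omega

lemma rowLen_diagB {p : ℕ} {b : Fin p → ℕ} (hb : StrictMono b) (i : Fin p) :
    (diagB b).rowLen (p - 1 - i) = b i - i := by
  apply eq_of_forall_lt_iff
  intro j
  rw [← YoungDiagram.mem_iff_lt_rowLen, mem_diagB' hb]
  omega

lemma rowLen_diagB_zero {p : ℕ} (b : Fin p → ℕ) (k : ℕ) (hk : p ≤ k) :
    (diagB b).rowLen k = 0 := by
  by_contra h
  have : (k, 0) ∈ diagB b := by
    rw [YoungDiagram.mem_iff_lt_rowLen]; omega
  rw [mem_diagB] at this
  omega

lemma le_b {p : ℕ} {b : Fin p → ℕ} (hb : StrictMono b) (i : Fin p) : (i : ℕ) ≤ b i := by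
  have := strictMono_sub hb (i := ⟨0, i.pos⟩) (j := i) (by rw [Fin.le_def]; simp)
  simp only at this
  omega

def SS (μ : YoungDiagram) (q : ℕ) : Set (SemistandardYoungTableau μ) :=
  {T : SemistandardYoungTableau μ | ∀ c ∈ μ.cells, T c.1 c.2 < q}

lemma SS_finite (μ : YoungDiagram) (q : ℕ) : (SS μ q).Finite := by
  have : Function.Injective (fun (T : SS μ q) (c : μ.cells) =>
      (⟨T.1 c.1.1 c.1.2, T.2 c.1 c.2⟩ : Fin q)) := by
    intro T T' h
    apply Subtype.ext
    apply SemistandardYoungTableau.ext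
    intro i j
    by_cases hc : (i, j) ∈ μ
    · have := congrFun h ⟨(i, j), (YoungDiagram.mem_cells _).2 hc⟩
      simpa using this
    · rw [T.1.zeros hc, T'.1.zeros hc]
  have := Finite.of_injective _ this
  exact Set.toFinite _

lemma le_SS {μ : YoungDiagram} (T : SemistandardYoungTableau μ) (k j : ℕ) (h : (k, j) ∈ μ) :
    k ≤ T k j := by
  induction k with
  | zero => omega
  | succ k ih =>
    have h1 := ih (μ.up_left_mem (Nat.le_succ k) le_rfl h)
    have h2 := T.col_strict (Nat.lt_add_one k) h
    omega

lemma numSSYT_zero (μ : YoungDiagram) (p : ℕ) (h : μ.rowLen p ≠ 0) : numSSYT μ p = 0 := by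
  have : {T : SemistandardYoungTableau μ | ∀ c ∈ μ.cells, T c.1 c.2 < p} = ∅ := by
    ext T
    simp only [Set.mem_ofPred_eq, Set.mem_empty_iff_false, iff_false]
    intro hT
    have hm : (p, 0) ∈ μ := by rw [YoungDiagram.mem_iff_lt_rowLen]; omega
    have := hT (p, 0) ((YoungDiagram.mem_cells _).2 hm)
    have := le_SS T p 0 hm
    simp at *
    omega
  rw [numSSYT, this, Set.ncard_empty]

def subT {μ : YoungDiagram} (T : SemistandardYoungTableau μ) (p : ℕ) : YoungDiagram where
  cells := μ.cells.filter (fun c => T c.1 c.2 < p)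
  isLowerSet := by
    rintro ⟨k, j⟩ ⟨k', j'⟩ hle hm
    simp only [Prod.mk_le_mk] at hle
    simp only [Finset.coe_filter, YoungDiagram.mem_cells, Set.mem_ofPred_eq] at hm ⊢
    have h1 : (k', j) ∈ μ := μ.up_left_mem hle.1 le_rfl hm.1
    have h2 : (k', j') ∈ μ := μ.up_left_mem hle.1 hle.2 hm.1
    refine ⟨h2, ?_⟩
    have h3 := T.col_weak hle.1 hm.1
    have h4 := T.row_weak_of_le hle.2 h1
    omega

lemma mem_subT {μ : YoungDiagram} (T : SemistandardYoungTableau μ) (p k j : ℕ) :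
    (k, j) ∈ subT T p ↔ (k, j) ∈ μ ∧ T k j < p := by
  rw [← YoungDiagram.mem_cells]
  simp [subT]

def restrT {μ ν : YoungDiagram} (T : SemistandardYoungTableau μ) (h : ν ≤ μ) :
    SemistandardYoungTableau ν where
  entry i j := if (i, j) ∈ ν then T i j else 0
  row_weak' {i j1 j2} hj hc := by
    rw [if_pos hc, if_pos (ν.up_left_mem le_rfl hj.le hc)]
    exact T.row_weak hj (h hc)
  col_strict' {i1 i2 j} hj hc := by
    rw [if_pos hc, if_pos (ν.up_left_mem hj.le le_rfl hc)]
    exact T.col_strict hj (h hc)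
  zeros' h := if_neg h

lemma restrT_apply {μ ν : YoungDiagram} (T : SemistandardYoungTableau μ) (h : ν ≤ μ) (i j : ℕ) :
    restrT T h i j = if (i, j) ∈ ν then T i j else 0 := rfl

def extT {μ ν : YoungDiagram} (p : ℕ) (T : SS ν p)
    (hs : ∀ k j, (k + 1, j) ∈ μ → (k, j) ∈ ν) : SemistandardYoungTableau μ where
  entry i j := if (i, j) ∈ ν then (if (i, j) ∈ μ then T.1 i j else 0) else
    if (i, j) ∈ μ then p else 0
  row_weak' {i j1 j2} hj hc := by
    have h1 := μ.up_left_mem le_rfl hj.le hc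
    by_cases h2 : (i, j2) ∈ ν
    · have h3 := ν.up_left_mem le_rfl hj.le h2
      simp only [h1, hc, h2, h3, if_true]
      exact T.1.row_weak hj h2
    · by_cases h3 : (i, j1) ∈ ν
      · simp only [h1, hc, h2, h3, if_true, if_false]
        exact (T.2 _ ((YoungDiagram.mem_cells _).2 h3)).le
      · simp only [h1, hc, h2, h3, if_true, if_false, le_refl]
  col_strict' {i1 i2 j} hj hc := by
    have h1 := μ.up_left_mem hj.le le_rfl hc
    have h3 : (i1, j) ∈ ν := by
      obtain ⟨k, rfl⟩ : ∃ k, i2 = k + 1 := ⟨i2 - 1, by omega⟩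
      exact ν.up_left_mem (by omega) le_rfl (hs k j hc)
    by_cases h2 : (i2, j) ∈ ν
    · simp only [h1, hc, h2, h3, if_true]
      exact T.1.col_strict hj h2
    · simp only [h1, hc, h2, h3, if_true, if_false]
      exact T.2 _ ((YoungDiagram.mem_cells _).2 h3)
  zeros' h := by simp [h]

lemma extT_apply {μ ν : YoungDiagram} (p : ℕ) (T : SS ν p)
    (hs : ∀ k j, (k + 1, j) ∈ μ → (k, j) ∈ ν) (i j : ℕ) : extT p T hs i j =
    if (i, j) ∈ ν then (if (i, j) ∈ μ then T.1 i j else 0) else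
    if (i, j) ∈ μ then p else 0 := rfl

lemma fiber_card {μ ν : YoungDiagram} (p : ℕ) (hle : ν ≤ μ)
    (hs : ∀ k j, (k + 1, j) ∈ μ → (k, j) ∈ ν) :
    ({T ∈ SS μ (p + 1) | subT T p = ν}).ncard = numSSYT ν p := by
  have key : ∀ T ∈ {T ∈ SS μ (p + 1) | subT T p = ν}, ∀ i j, (i, j) ∈ ν ↔ (i, j) ∈ μ ∧ T i j < p := by
    rintro T ⟨-, rfl⟩ i j
    exact mem_subT T p i j
  refine Set.ncard_congr (fun T _ => restrT T hle) ?_ ?_ ?_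
  · intro T hT
    rintro ⟨i, j⟩ hc
    rw [YoungDiagram.mem_cells] at hc
    simp only
    rw [restrT_apply, if_pos hc]
    exact ((key T hT i j).1 hc).2
  · intro T T' hT hT' h
    apply SemistandardYoungTableau.ext
    intro i j
    by_cases hm : (i, j) ∈ μ
    · by_cases hn : (i, j) ∈ ν
      · have := congrArg (fun S => S i j) h
        simpa [restrT_apply, hn] using this
      · have h1 : T i j < p + 1 := hT.1 _ ((YoungDiagram.mem_cells _).2 hm)
        have h1' : T' i j < p + 1 := hT'.1 _ ((YoungDiagram.mem_cells _).2 hm)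
        have h2 := (key T hT i j).not.1 hn
        have h2' := (key T' hT' i j).not.1 hn
        simp only [hm, true_and, not_lt] at h2 h2'
        omega
    · rw [T.zeros hm, T'.zeros hm]
  · intro T hT
    have hT2 : ∀ i j, (i, j) ∈ ν → T i j < p := fun i j h =>
      hT (i, j) ((YoungDiagram.mem_cells _).2 h)
    refine ⟨extT p ⟨T, hT⟩ hs, ⟨?_, ?_⟩, ?_⟩
    · rintro ⟨i, j⟩ hc
      rw [YoungDiagram.mem_cells] at hc
      simp only [extT_apply, hc, if_true]
      split_ifs with h1
      · have := hT2 i j h1; omega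
      · omega
    · apply SetLike.ext
      rintro ⟨i, j⟩
      rw [mem_subT, extT_apply]
      by_cases h1 : (i, j) ∈ ν
      · have h2 := hle h1
        have h2 : (i, j) ∈ μ := h2
        simp [h1, h2, hT2 i j h1]
      · by_cases h2 : (i, j) ∈ μ <;> simp [h1, h2]
    · apply SemistandardYoungTableau.ext
      intro i j
      rw [restrT_apply, extT_apply]
      by_cases h1 : (i, j) ∈ ν
      · have h2 := hle h1
        have h2 : (i, j) ∈ μ := h2
        simp [h1, h2]
      · simp [h1, T.zeros h1]

lemma strictMono_of_box {p : ℕ} {a : Fin (p + 1) → ℕ}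
    {b : Fin p → ℕ} (hb : b ∈ Fintype.piFinset fun i : Fin p => Finset.Ico (a i.castSucc) (a i.succ)) :
    StrictMono b := by
  simp only [Fintype.mem_piFinset, Finset.mem_Ico] at hb
  cases p with
  | zero => intro i; exact i.elim0
  | succ p =>
  rw [Fin.strictMono_iff_lt_succ]
  intro i
  have h1 := hb i.castSucc
  have h2 := hb i.succ
  rw [Fin.succ_castSucc] at h1
  omega

lemma numSSYT_rec {p : ℕ} {a : Fin (p + 1) → ℕ} (ha : StrictMono a) :
    numSSYT (diagB a) (p + 1) =
      ∑ b ∈ Fintype.piFinset fun i : Fin p => Finset.Ico (a i.castSucc) (a i.succ),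
        numSSYT (diagB b) p := by
  classical
  have hfin := SS_finite (diagB a) (p + 1)
  have h1 : numSSYT (diagB a) (p + 1) = hfin.toFinset.card :=
    Set.ncard_eq_toFinset_card _ hfin
  let bT : SemistandardYoungTableau (diagB a) → Fin p → ℕ :=
    fun T i => (subT T p).rowLen (p - 1 - i) + i
  have hbT : ∀ (T : SemistandardYoungTableau (diagB a)) (i : Fin p) (j : ℕ),
      j + i < bT T i ↔ (p - 1 - i, j) ∈ diagB a ∧ T (p - 1 - i) j < p := by
    intro T i j
    rw [← mem_subT, YoungDiagram.mem_iff_lt_rowLen]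
    simp only [bT]; omega
  have hmaps : Set.MapsTo bT (hfin.toFinset : Set (SemistandardYoungTableau (diagB a)))
     (Fintype.piFinset fun i : Fin p => Finset.Ico (a i.castSucc) (a i.succ) : Finset (Fin p → ℕ)) := by
    intro T hT
    simp only [Set.Finite.coe_toFinset] at hT
    simp only [Finset.mem_coe, Fintype.mem_piFinset, Finset.mem_Ico]
    intro i
    constructor
    · by_contra hcon
      have hi1 : (i : ℕ) ≤ bT T i := by simp [bT]
      have h2 := (mem_diagB' ha i.castSucc (bT T i - i)).2 (by simp only [Fin.val_castSucc]; omega)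
      simp only [Fin.val_castSucc] at h2
      have e : p + 1 - 1 - (i : ℕ) = (p - 1 - i) + 1 := by omega
      rw [e] at h2
      have h3 := T.col_strict (Nat.lt_add_one _) h2
      have h4 := hT _ ((YoungDiagram.mem_cells _).2 h2)
      simp only at h4
      have h5 := (hbT T i (bT T i - i)).2 ⟨(diagB a).up_left_mem (Nat.le_succ _) le_rfl h2, by omega⟩
      omega
    · by_contra hcon
      have hi1 : (i : ℕ) + 1 ≤ a i.succ := by simpa using le_b ha i.succ
      have h2 := ((hbT T i (a i.succ - 1 - i)).1 (by omega)).1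
      have h3 := mem_diagB' ha i.succ (a i.succ - 1 - i)
      simp only [Fin.val_succ] at h3
      have e : p + 1 - 1 - ((i : ℕ) + 1) = (p - 1 - i) := by omega
      rw [e, iff_true_left h2] at h3
      omega
  rw [h1, Finset.card_eq_sum_card_fiberwise hmaps]
  apply Finset.sum_congr rfl
  intro b hb
  have hbm := strictMono_of_box hb
  simp only [Fintype.mem_piFinset, Finset.mem_Ico] at hb
  have hle : diagB b ≤ diagB a := by
    rintro ⟨k, j⟩ hm
    have hm : (k, j) ∈ diagB b := hm
    have hk := ((mem_diagB _ _ _).1 hm).1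
    show (k, j) ∈ diagB a
    have h2 := mem_diagB' hbm ⟨p - 1 - k, by omega⟩ j
    have h3 := mem_diagB' ha (Fin.succ ⟨p - 1 - k, by omega⟩) j
    have h4 := hb ⟨p - 1 - k, by omega⟩
    simp only [Fin.val_succ] at h2 h3
    have e1 : p - 1 - (p - 1 - k) = k := by omega
    have e2 : p + 1 - 1 - (p - 1 - k + 1) = k := by omega
    rw [e1] at h2
    rw [e2] at h3
    rw [h3]
    have := h2.1 hm
    omega
  have hs : ∀ k j, (k + 1, j) ∈ diagB a → (k, j) ∈ diagB b := by
    intro k j hm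
    have hk := ((mem_diagB _ _ _).1 hm).1
    have h2 := mem_diagB' hbm ⟨p - 1 - k, by omega⟩ j
    have h3 := mem_diagB' ha (Fin.castSucc ⟨p - 1 - k, by omega⟩) j
    have h4 := hb ⟨p - 1 - k, by omega⟩
    simp only [Fin.val_castSucc] at h2 h3
    have e1 : p - 1 - (p - 1 - k) = k := by omega
    have e2 : p + 1 - 1 - (p - 1 - k) = k + 1 := by omega
    rw [e1] at h2
    rw [e2] at h3
    rw [h2]
    have := h3.1 hm
    omega
  rw [← fiber_card p hle hs, ← Set.ncard_coe_finset]
  congr 1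
  ext T
  simp only [Finset.coe_filter, Set.Finite.mem_toFinset, Set.mem_ofPred_eq]
  apply and_congr_right
  intro hT
  constructor
  · intro h
    apply SetLike.ext
    rintro ⟨k, j⟩
    by_cases hk : k < p
    · have h2 := mem_diagB' hbm ⟨p - 1 - k, by omega⟩ j
      have e1 : p - 1 - (p - 1 - k) = k := by omega
      simp only [e1] at h2
      have h3 := hbT T ⟨p - 1 - k, by omega⟩ j
      simp only [e1] at h3
      rw [h2, ← h, h3, mem_subT]
    · constructor
      · intro hm
        rw [mem_subT] at hm
        have := le_SS T k j hm.1
        omega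
      · intro hm
        have hk := ((mem_diagB _ _ _).1 hm).1
        omega
  · intro h
    funext i
    simp only [bT]
    rw [h, rowLen_diagB hbm]
    have := le_b hbm i
    omega

lemma det_choose_rec {p : ℕ} (a : Fin (p + 1) → ℕ) (ha : StrictMono a) :
    ∑ b ∈ Fintype.piFinset fun i : Fin p => Finset.Ico (a i.castSucc) (a i.succ),
      (Matrix.of fun i j : Fin p => ((b i).choose j : ℤ)).det =
    (Matrix.of fun i j : Fin (p + 1) => ((a i).choose j : ℤ)).det := by
  have h1 := (Matrix.detRowAlternating (n := Fin p) (R := ℤ)).toMultilinearMap.map_sum_finset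
    (fun (_ : Fin p) (b : ℕ) (j : Fin p) => (b.choose j : ℤ))
    (fun i : Fin p => Finset.Ico (a i.castSucc) (a i.succ))
  refine Eq.trans h1.symm ?_
  have hsum : ∀ (m n k : ℕ), m ≤ n → ∑ b ∈ Finset.Ico m n, (b.choose k : ℤ) =
      n.choose (k + 1) - m.choose (k + 1) := by
    intro m n k hmn
    induction n, hmn using Nat.le_induction with
    | base => simp
    | succ n hmn ih =>
      rw [Finset.sum_Ico_succ_top hmn, ih, Nat.choose_succ_succ]
      push_cast; ring
  let B : Matrix (Fin (p + 1)) (Fin (p + 1)) ℤ :=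
    Matrix.of (Fin.cons (fun j => ((a 0).choose j : ℤ))
      (fun (i : Fin p) j => ((a i.succ).choose j : ℤ) - (a i.castSucc).choose j))
  rw [Matrix.det_eq_of_forall_row_eq_smul_add_pred (B := B) (fun _ => 1) (by intro j; simp [B])
    (by intro i j; simp [B])]
  rw [Matrix.det_succ_column_zero, Fin.sum_univ_succ]
  have : ∀ i : Fin p, B i.succ 0 = 0 := by intro i; simp [B]
  simp only [this, mul_zero, zero_mul, Finset.sum_const_zero, add_zero]
  simp only [B, Fin.val_zero, pow_zero, one_mul, Matrix.of_apply, Fin.cons_zero, Nat.choose_zero_right,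
    Nat.cast_one]
  show Matrix.det _ = Matrix.det _
  congr 1
  ext i j
  simp only [Finset.sum_apply, Matrix.submatrix_apply, Matrix.of_apply, Fin.succAbove_zero,
    Fin.cons_succ, Fin.val_succ]
  exact hsum _ _ _ (ha.monotone (Fin.castSucc_lt_succ).le)

lemma numSSYT_diagB {p : ℕ} (b : Fin p → ℕ) (hb : StrictMono b) :
    (numSSYT (diagB b) p : ℤ) = (Matrix.of fun i j : Fin p => ((b i).choose j : ℤ)).det := by
  induction p with
  | zero =>
    simp only [Matrix.det_isEmpty]
    have h : ∀ i j, (i, j) ∉ diagB b := by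
      intro i j h
      have := ((mem_diagB _ _ _).1 h).1
      omega
    have : {T : SemistandardYoungTableau (diagB b) | ∀ c ∈ (diagB b).cells, T c.1 c.2 < 0}
      = {default} := by
      ext T
      simp only [Set.mem_ofPred_eq, Set.mem_singleton_iff]
      constructor
      · intro _
        apply SemistandardYoungTableau.ext
        intro i j
        rw [SemistandardYoungTableau.zeros _ (h i j), SemistandardYoungTableau.zeros _ (h i j)]
      · rintro - ⟨i, j⟩ hc
        exact absurd ((YoungDiagram.mem_cells _).1 hc) (h i j)
    rw [numSSYT, this, Set.ncard_singleton]
    rfl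
  | succ p ih =>
    rw [numSSYT_rec hb, ← det_choose_rec b hb]
    push_cast
    apply Finset.sum_congr rfl
    intro c hc
    exact ih c (strictMono_of_box hc)

lemma det_choose_vdm {p : ℕ} (b : Fin p → ℕ) :
    (∏ i : Fin p, ((i : ℕ).factorial : ℤ)) * (Matrix.of fun i j : Fin p => ((b i).choose j : ℤ)).det
      = (Matrix.vandermonde (fun i => (b i : ℤ))).det := by
  rw [Matrix.det_eval_matrixOfPolynomials_eq_det_vandermonde (fun i ↦ (b i : ℤ))
      (fun i => descPochhammer ℤ i)
      (fun i => descPochhammer_natDegree ℤ i)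
      (fun i => monic_descPochhammer ℤ i), ← Matrix.det_mul_row]
  congr 1
  ext i j
  simp only [Matrix.of_apply]
  rw [descPochhammer_eval_eq_descFactorial ℤ _ _, Nat.descFactorial_eq_factorial_mul_choose]
  push_cast; rfl

lemma prod_cells_diagB {p : ℕ} {b : Fin p → ℕ} (hb : StrictMono b) (f : ℕ × ℕ → ℕ) :
    ∏ c ∈ (diagB b).cells, f c =
      ∏ i : Fin p, ∏ j ∈ Finset.range (b i - i), f (p - 1 - i, j) := by
  rw [Finset.prod_sigma']
  symm
  refine Finset.prod_bij (fun x _ => (p - 1 - (x.1 : ℕ), x.2)) ?_ ?_ ?_ ?_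
  · rintro ⟨i, j⟩ h
    simp only [Finset.mem_sigma, Finset.mem_univ, Finset.mem_range, true_and] at h
    rw [YoungDiagram.mem_cells, mem_diagB' hb]
    simp only
    omega
  · rintro ⟨i, j⟩ h ⟨i', j'⟩ h' he
    simp only [Prod.mk.injEq] at he
    obtain ⟨h1, rfl⟩ := he
    have : i = i' := by apply Fin.ext; omega
    subst this; rfl
  · rintro ⟨k, j⟩ h
    rw [YoungDiagram.mem_cells] at h
    have hk := ((mem_diagB _ _ _).1 h).1
    have h2 := mem_diagB' hb ⟨p - 1 - k, by omega⟩ j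
    have e1 : p - 1 - (p - 1 - k) = k := by omega
    simp only [e1] at h2
    refine ⟨⟨⟨p - 1 - k, by omega⟩, j⟩, ?_, ?_⟩
    · simp only [Finset.mem_sigma, Finset.mem_univ, Finset.mem_range, true_and]
      have := h2.1 h
      omega
    · simp [e1]
  · rintro ⟨i, j⟩ h
    rfl

lemma card_diagB {p : ℕ} {b : Fin p → ℕ} (hb : StrictMono b) :
    (diagB b).card + ∑ i : Fin p, (i : ℕ) = ∑ i, b i := by
  have h := prod_cells_diagB hb (fun _ => 2)
  simp only [Finset.prod_const, Finset.card_range, Finset.prod_pow_eq_pow_sum] at h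
  have h2 := Nat.pow_right_injective (le_refl 2) h
  have h3 : (diagB b).card = ∑ i, (b i - i) := h2
  rw [h3, ← Finset.sum_add_distrib]
  apply Finset.sum_congr rfl
  intro i _
  have := le_b hb i
  omega

lemma hook_row {p : ℕ} {b : Fin p → ℕ} (hb : StrictMono b) (i : Fin p) :
    (∏ j ∈ Finset.range (b i - i), hookLen (diagB b) (p - 1 - i, j)) *
      ∏ i' ∈ Finset.Iio i, (b i - b i') = (b i).factorial := by
  have hib := le_b hb i
  set c := fun j => (diagB b).colLen j with hc
  have hcp : ∀ j, c j ≤ p := by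
    intro j
    by_contra h
    have : (p, j) ∈ diagB b := by rw [YoungDiagram.mem_iff_lt_colLen]; simp only [hc] at h; omega
    have := ((mem_diagB _ _ _).1 this).1
    omega
  have hci : ∀ (i' : Fin p) j, p - 1 - i' < c j ↔ j + i' < b i' := by
    intro i' j
    rw [← mem_diagB' hb, YoungDiagram.mem_iff_lt_colLen]
  have hh : ∀ j ∈ Finset.range (b i - i), hookLen (diagB b) (p - 1 - i, j) = b i + c j - p - j := by
    intro j hj
    rw [Finset.mem_range] at hj
    have := (hci i j).2 (by omega)
    simp only [hookLen, rowLen_diagB hb]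
    change b i - i + c j - (p - 1 - i) - j - 1 = _
    omega
  rw [Finset.prod_congr rfl hh]
  refine Eq.trans (Finset.prod_disjSum (Finset.range (b i - i)) (Finset.Iio i)
    (Sum.elim (fun j => b i + c j - p - j) (fun i' => b i - b i'))).symm ?_
  rw [← Finset.prod_Ico_id_eq_factorial]
  have hinj : Set.InjOn (Sum.elim (fun j => b i + c j - p - j) (fun i' => b i - b i'))
      ((Finset.range (b i - i)).disjSum (Finset.Iio i) : Set (ℕ ⊕ Fin p)) := by
    have hne : ∀ j < b i - i, ∀ i' < i, b i + c j - p - j ≠ b i - b i' := by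
      intro j hj i' hi' h
      have h1 := (hci i j).2 (by omega)
      have h2 := hci i' j
      have h3 : b i' < b i := hb hi'
      have := i'.2
      by_cases h4 : j + i' < b i'
      · have := h2.2 h4
        omega
      · have := (not_congr h2).2 h4
        omega
    rintro (j | i1) h1 (j' | i2) h2 he
    all_goals simp only [Finset.mem_coe, Finset.inl_mem_disjSum, Finset.inr_mem_disjSum,
      Finset.mem_range, Finset.mem_Iio] at h1 h2
    all_goals simp only [Sum.elim_inl, Sum.elim_inr] at he
    · have h3 := (hci i j).2 (by omega)
      have h4 := (hci i j').2 (by omega)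
      congr 1
      rcases lt_trichotomy j j' with h | h | h
      · have := (diagB b).colLen_anti j j' h.le
        change c j' ≤ c j at this
        omega
      · exact h
      · have := (diagB b).colLen_anti j' j h.le
        change c j ≤ c j' at this
        omega
    · exact absurd he (hne _ h1 _ h2)
    · exact absurd he.symm (hne _ h2 _ h1)
    · have h3 : b i1 < b i := hb h1
      have h4 : b i2 < b i := hb h2
      congr 1
      apply hb.injective
      omega
  have himg : Finset.image (Sum.elim (fun j => b i + c j - p - j) (fun i' => b i - b i'))
      ((Finset.range (b i - i)).disjSum (Finset.Iio i)) = Finset.Ico 1 (b i + 1) := by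
    apply Finset.eq_of_subset_of_card_le
    · intro y hy
      rw [Finset.mem_image] at hy
      obtain ⟨z, hz, rfl⟩ := hy
      rw [Finset.mem_Ico]
      rcases z with j | i1
      · simp only [Finset.inl_mem_disjSum, Finset.mem_range] at hz
        have h3 := (hci i j).2 (by omega)
        have := hcp j
        simp only [Sum.elim_inl]
        omega
      · simp only [Finset.inr_mem_disjSum, Finset.mem_Iio] at hz
        have h3 : b i1 < b i := hb hz
        simp only [Sum.elim_inr]
        omega
    · rw [Finset.card_image_of_injOn hinj]
      simp only [Nat.card_Ico, Finset.card_disjSum, Finset.card_range, Fin.card_Iio]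
      omega
  rw [← himg, Finset.prod_image hinj]

lemma hookProd_diagB {p : ℕ} {b : Fin p → ℕ} (hb : StrictMono b) :
    hookProd (diagB b) * ∏ i : Fin p, ∏ i' ∈ Finset.Iio i, (b i - b i') =
      ∏ i, (b i).factorial := by
  rw [hookProd, prod_cells_diagB hb, ← Finset.prod_mul_distrib]
  exact Finset.prod_congr rfl fun i _ => hook_row hb i

lemma vdm_cast {p : ℕ} {b : Fin p → ℕ} (hb : StrictMono b) :
    (Matrix.vandermonde (fun i => (b i : ℝ))).det =
      ((∏ i : Fin p, ∏ i' ∈ Finset.Iio i, (b i - b i') : ℕ) : ℝ) := by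
  rw [Matrix.det_vandermonde, Finset.prod_comm' (t' := Finset.univ) (s' := fun i => Finset.Iio i)
    (by intro x y; simp)]
  push_cast
  refine Finset.prod_congr rfl fun i _ => Finset.prod_congr rfl fun j hj => ?_
  rw [Finset.mem_Iio] at hj
  rw [Nat.cast_sub (hb hj).le]

lemma vdm_sq {p : ℕ} (x : Fin p → ℝ) : vdm x ^ 2 = (Matrix.vandermonde x).det ^ 2 := by
  rw [Matrix.det_vandermonde, vdm]
  simp only [← Finset.prod_pow]
  refine Finset.prod_congr rfl fun i _ => Finset.prod_congr rfl fun j hj => ?_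
  ring

lemma weight_diagB {p : ℕ} {b : Fin p → ℕ} (hb : StrictMono b) (hp : 1 ≤ p) (x : ℝ) (hx : 0 < x) :
    Real.exp (-(p * x)) * (p * x) ^ (diagB b).card / (Nat.factorial (diagB b).card : ℝ) *
      Pword (diagB b).card p (diagB b) =
    (x ^ (∑ i : Fin p, (i : ℕ)))⁻¹ * (∏ i : Fin p, ((i : ℕ).factorial : ℝ))⁻¹ *
      (vdm (fun i => (b i : ℝ)) ^ 2 * ∏ i, (Real.exp (-x) * x ^ (b i) / ((b i).factorial : ℝ))) := by
  have h1 := numSSYT_diagB b hb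
  have h2 := det_choose_vdm b
  rw [← h1] at h2
  have h3 : (∏ i : Fin p, ((i : ℕ).factorial : ℝ)) * (numSSYT (diagB b) p : ℝ) =
      (Matrix.vandermonde (fun i => (b i : ℝ))).det := by
    rw [Matrix.det_vandermonde] at h2 ⊢
    exact_mod_cast congrArg (Int.cast : ℤ → ℝ) h2
  have h4 : (hookProd (diagB b) : ℝ) * (Matrix.vandermonde (fun i => (b i : ℝ))).det =
      ∏ i, ((b i).factorial : ℝ) := by
    rw [vdm_cast hb]
    exact_mod_cast hookProd_diagB hb
  have h5 := card_diagB hb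
  rw [vdm_sq]
  set V := (Matrix.vandermonde (fun i => (b i : ℝ))).det
  have hF : (∏ i : Fin p, ((i : ℕ).factorial : ℝ)) ≠ 0 :=
    Finset.prod_ne_zero_iff.2 fun i _ => by positivity
  have hG : (∏ i, ((b i).factorial : ℝ)) ≠ 0 :=
    Finset.prod_ne_zero_iff.2 fun i _ => by positivity
  have hH : (hookProd (diagB b) : ℝ) ≠ 0 := by
    intro h; rw [h, zero_mul] at h4; exact hG h4.symm
  have hV : V ≠ 0 := by
    intro h; rw [h, mul_zero] at h4; exact hG h4.symm
  rw [Finset.prod_div_distrib, Finset.prod_mul_distrib, Finset.prod_pow_eq_pow_sum, ← h5, ← h4,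
    Finset.prod_const, Finset.card_univ, Fintype.card_fin, ← Real.exp_nat_mul, pow_add, ← h3, Pword,
    fSYT, mul_pow, mul_neg]
  rw [← h3] at hV
  have hp' : (p : ℝ) ≠ 0 := by positivity
  have hN := right_ne_zero_of_mul hV
  have hc : ((diagB b).card.factorial : ℝ) ≠ 0 := by positivity
  field_simp

lemma indSup_diagB {p : ℕ} {b : Fin p → ℕ} (hb : StrictMono b) (n : ℕ) :
    indSup n p (diagB b) = if ∀ i, n - p ≤ b i then 1 else 0 := by
  rw [indSup]
  congr 1
  apply propext
  constructor
  · intro h i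
    have := h (p - 1 - i) (by omega)
    rw [rowLen_diagB hb] at this
    omega
  · intro h k hk
    have h1 := rowLen_diagB hb ⟨p - 1 - k, by omega⟩
    have e1 : p - 1 - (p - 1 - k) = k := by omega
    simp only [e1] at h1
    rw [h1]
    have h2 := strictMono_sub hb (i := ⟨0, by omega⟩) (j := ⟨p - 1 - k, by omega⟩)
      (by rw [Fin.le_def]; simp)
    have h3 := h ⟨0, by omega⟩
    simp only at h2
    omega

lemma Hstrip_diagB {p : ℕ} {b : Fin p → ℕ} (hb : StrictMono b) (n q : ℕ) (hpq : p ≤ q) (hqn : q ≤ n)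
    (h : ∀ i, n - p ≤ b i) :
    (Hstrip n p q (diagB b) : ℝ) = ∏ i, ∏ k ∈ Finset.range (q - p),
      ((b i : ℝ) - ((n : ℝ) - p) + (k + 1)) := by
  rw [Hstrip, Finset.prod_filter, prod_cells_diagB hb]
  push_cast
  apply Finset.prod_congr rfl
  intro i _
  have hi : n - p ≤ b i - i := by
    have h2 := strictMono_sub hb (i := ⟨0, i.pos⟩) (j := i) (by rw [Fin.le_def]; simp)
    have h3 := h ⟨0, i.pos⟩
    simp only at h2
    omega
  rw [← Finset.prod_filter]
  have : (Finset.range (b i - i)).filter (fun j => n - q ≤ j ∧ j < n - p) =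
      Finset.Ico (n - q) (n - p) := by
    ext j
    simp only [Finset.mem_filter, Finset.mem_range, Finset.mem_Ico]
    omega
  rw [this, Finset.prod_Ico_eq_prod_range]
  have e : n - p - (n - q) = q - p := by omega
  rw [e, ← Finset.prod_range_reflect]
  apply Finset.prod_congr rfl
  intro k hk
  rw [Finset.mem_range] at hk
  have hj : n - q + (q - p - 1 - k) < n - p := by omega
  set j := n - q + (q - p - 1 - k) with hjd
  have hc : (diagB b).colLen j = p := by
    apply eq_of_forall_lt_iff
    intro r
    rw [← YoungDiagram.mem_iff_lt_colLen]
    constructor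
    · intro hm
      exact ((mem_diagB _ _ _).1 hm).1
    · intro hr
      have h2 := mem_diagB' hb ⟨p - 1 - r, by omega⟩ j
      have e1 : p - 1 - (p - 1 - r) = r := by omega
      simp only [e1] at h2
      rw [h2]
      have h4 := strictMono_sub hb (i := ⟨0, by omega⟩) (j := ⟨p - 1 - r, by omega⟩)
        (by rw [Fin.le_def]; simp)
      have h3 := h ⟨0, by omega⟩
      simp only at h4
      omega
  rw [hookLen, rowLen_diagB hb, hc]
  simp only
  have e3 : b i - i + p - (p - 1 - i) - j - 1 = b i - (n - p) + (k + 1) := by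
    have := i.2
    omega
  rw [e3]
  push_cast [Nat.cast_sub (h i), Nat.cast_sub (hpq.trans hqn)]
  ring

lemma det_sq_expand {α : Type*} {p : ℕ} (φ : Fin p → α → ℝ) (W : α → ℝ) (ξ : Fin p → α) :
    (Matrix.of fun i j => φ j (ξ i)).det ^ 2 * ∏ i, W (ξ i) =
      ∑ σ : Equiv.Perm (Fin p), ∑ τ : Equiv.Perm (Fin p),
        (((Equiv.Perm.sign σ : ℤ) : ℝ) * ((Equiv.Perm.sign τ : ℤ) : ℝ)) *
          ∏ i, (φ (σ i) (ξ i) * φ (τ i) (ξ i) * W (ξ i)) := by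
  rw [← Matrix.det_transpose, Matrix.det_apply', sq, Finset.sum_mul_sum, Finset.sum_mul]
  refine Finset.sum_congr rfl fun σ _ => ?_
  rw [Finset.sum_mul]
  refine Finset.sum_congr rfl fun τ _ => ?_
  simp only [Matrix.transpose_apply, Matrix.of_apply, Finset.prod_mul_distrib]
  ring

lemma andreief {α : Type*} [MeasurableSpace α] (ν : Measure α) [SigmaFinite ν] {p : ℕ}
    (φ : Fin p → α → ℝ) (W : α → ℝ) (hint : ∀ i j, Integrable (fun a => φ i a * φ j a * W a) ν) :
    Integrable (fun ξ : Fin p → α => (Matrix.of fun i j => φ j (ξ i)).det ^ 2 * ∏ i, W (ξ i))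
      (Measure.pi fun _ => ν) ∧
    ∫ ξ : Fin p → α, (Matrix.of fun i j => φ j (ξ i)).det ^ 2 * ∏ i, W (ξ i)
      ∂(Measure.pi fun _ => ν) =
      ∑ σ : Equiv.Perm (Fin p), ∑ τ : Equiv.Perm (Fin p),
        (((Equiv.Perm.sign σ : ℤ) : ℝ) * ((Equiv.Perm.sign τ : ℤ) : ℝ)) *
          ∏ i, ∫ a, φ (σ i) a * φ (τ i) a * W a ∂ν := by
  simp only [det_sq_expand]
  have h : ∀ σ τ : Equiv.Perm (Fin p), Integrable (fun ξ : Fin p → α =>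
      (((Equiv.Perm.sign σ : ℤ) : ℝ) * ((Equiv.Perm.sign τ : ℤ) : ℝ)) *
          ∏ i, (φ (σ i) (ξ i) * φ (τ i) (ξ i) * W (ξ i))) (Measure.pi fun _ => ν) := by
    intro σ τ
    apply Integrable.const_mul
    exact Integrable.fintype_prod (f := fun i a => φ (σ i) a * φ (τ i) a * W a)
      (fun i => hint _ _)
  refine ⟨integrable_finsetSum _ fun σ _ => integrable_finsetSum _ fun τ _ => h σ τ, ?_⟩
  rw [integral_finsetSum _ fun σ _ => integrable_finsetSum _ fun τ _ => h σ τ]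
  refine Finset.sum_congr rfl fun σ _ => ?_
  rw [integral_finsetSum _ fun τ _ => h σ τ]
  refine Finset.sum_congr rfl fun τ _ => ?_
  rw [integral_const_mul]
  congr 1
  exact integral_fintype_prod_eq_prod (fun i a => φ (σ i) a * φ (τ i) a * W a)

open Polynomial in
def hermP : ℕ → ℝ[X]
  | 0 => 1
  | k + 1 => X * hermP k - C (1 / 2) * derivative (hermP k)

open Polynomial in
lemma hermP_monic (k : ℕ) : (hermP k).Monic ∧ (hermP k).natDegree = k := by
  induction k with
  | zero => simp [hermP]
  | succ k ih =>
    have h1 : (X * hermP k).Monic := monic_X.mul ih.1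
    have h2 : (X * hermP k).natDegree = k + 1 := by
      rw [monic_X.natDegree_mul ih.1, natDegree_X, ih.2]; ring
    have h3 : (C (1 / 2) * derivative (hermP k)).degree < (X * hermP k).degree := by
      apply degree_lt_degree
      rw [h2]
      refine lt_of_le_of_lt (natDegree_C_mul_le _ _) ?_
      refine lt_of_le_of_lt (natDegree_derivative_le _) ?_
      omega
    refine ⟨h1.sub_of_left h3, ?_⟩
    refine (natDegree_sub_eq_left_of_natDegree_lt ?_).trans h2
    by_cases hP : C (1 / 2) * derivative (hermP k) = 0
    · rw [hP, h2]; simp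
    · exact natDegree_lt_natDegree hP h3

open Polynomial in
lemma integrable_poly_gauss (P : ℝ[X]) : Integrable (fun x : ℝ => P.eval x * Real.exp (-(x ^ 2))) := by
  simp only [eval_eq_sum_range, Finset.sum_mul]
  apply integrable_finsetSum
  intro k _
  have := integrable_rpow_mul_exp_neg_mul_sq (b := 1) one_pos (s := k)
    (by have : (0 : ℝ) ≤ k := Nat.cast_nonneg k
        linarith)
  have := this.const_mul (P.coeff k)
  refine this.congr (ae_of_all _ fun x => ?_)
  simp [Real.rpow_natCast]
  ring

open Polynomial in
lemma gauss_ibp (P : ℝ[X]) : ∫ x : ℝ, (X * P).eval x * Real.exp (-(x ^ 2)) =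
    (1 / 2) * ∫ x : ℝ, (derivative P).eval x * Real.exp (-(x ^ 2)) := by
  have h := integral_eq_zero_of_hasDerivAt_of_integrable
    (f := fun x : ℝ => P.eval x * Real.exp (-(x ^ 2)))
    (f' := fun x : ℝ => (derivative P).eval x * Real.exp (-(x ^ 2)) -
      2 * ((X * P).eval x * Real.exp (-(x ^ 2)))) ?_ ?_ (integrable_poly_gauss P)
  · rw [integral_sub (integrable_poly_gauss _) ((integrable_poly_gauss _).const_mul _),
      integral_const_mul] at h
    linarith
  · intro x
    have h1 := (P.hasDerivAt x).mul ((((hasDerivAt_id x).pow 2).neg).exp)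
    convert! h1 using 1
    simp
    ring
  · exact (integrable_poly_gauss _).sub ((integrable_poly_gauss _).const_mul _)

open Polynomial in
lemma hermP_orth (k : ℕ) (P : ℝ[X]) : ∫ x : ℝ, (hermP k * P).eval x * Real.exp (-(x ^ 2)) =
    (1 / 2) ^ k * ∫ x : ℝ, (derivative^[k] P).eval x * Real.exp (-(x ^ 2)) := by
  induction k generalizing P with
  | zero => simp [hermP]
  | succ k ih =>
    have h1 := gauss_ibp (hermP k * P)
    have h2 := ih (derivative P)
    have e : ∀ x : ℝ, (hermP (k + 1) * P).eval x * Real.exp (-(x ^ 2)) =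
      (X * (hermP k * P)).eval x * Real.exp (-(x ^ 2)) -
      (1 / 2) * ((derivative (hermP k) * P).eval x * Real.exp (-(x ^ 2))) := by
      intro x
      simp [hermP]
      ring
    simp only [e]
    rw [integral_sub (integrable_poly_gauss _) ((integrable_poly_gauss _).const_mul _),
      integral_const_mul, h1, derivative_mul]
    simp only [eval_add, add_mul]
    rw [integral_add (integrable_poly_gauss _) (integrable_poly_gauss _), h2,
      Function.iterate_succ_apply]
    ring

open Polynomial in
lemma hermP_norm (k j : ℕ) : ∫ x : ℝ, (hermP k).eval x * (hermP j).eval x * Real.exp (-(x ^ 2)) =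
    if k = j then (k.factorial : ℝ) * √π / 2 ^ k else 0 := by
  have hlt : ∀ k j, j < k →
      ∫ x : ℝ, (hermP k).eval x * (hermP j).eval x * Real.exp (-(x ^ 2)) = 0 := by
    intro k j h
    have := hermP_orth k (hermP j)
    rw [iterate_derivative_eq_zero (by rw [(hermP_monic j).2]; exact h)] at this
    simpa using this
  split_ifs with h
  · subst h
    have := hermP_orth k (hermP k)
    have hd : derivative^[k] (hermP k) = C (k.factorial : ℝ) := by
      have h0 : (derivative^[k] (hermP k)).natDegree = 0 := by
        have := natDegree_iterate_derivative (hermP k) k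
        rw [(hermP_monic k).2] at this
        omega
      rw [eq_C_of_natDegree_eq_zero h0, coeff_iterate_derivative]
      have := (hermP_monic k).1.coeff_natDegree
      rw [(hermP_monic k).2] at this
      simp [this, Nat.descFactorial_self]
    rw [hd] at this
    simp only [eval_mul, eval_C] at this
    rw [this, integral_const_mul]
    have hg := integral_gaussian 1
    simp only [neg_mul, one_mul, div_one] at hg
    rw [hg]
    field_simp
    try simp
  · rcases lt_or_gt_of_ne h with h | h
    · rw [← hlt j k h]
      congr 1; ext x; ring
    · exact hlt k j h

lemma denom_eq (p : ℕ) : ∫ ξ : Fin p → ℝ, vdm ξ ^ 2 * ∏ i, Real.exp (-(ξ i ^ 2)) =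
    p.factorial * ∏ i : Fin p, (((i : ℕ).factorial : ℝ) * √π / 2 ^ (i : ℕ)) := by
  have h := (andreief (volume : Measure ℝ) (p := p) (fun j x => (hermP j).eval x)
    (fun x => Real.exp (-(x ^ 2))) (fun i j => by
      simpa using integrable_poly_gauss (hermP i * hermP j))).2
  have e : ∀ ξ : Fin p → ℝ, vdm ξ ^ 2 =
      (Matrix.of fun i j : Fin p => (hermP j).eval (ξ i)).det ^ 2 := by
    intro ξ
    rw [vdm_sq, Matrix.det_eval_matrixOfPolynomials_eq_det_vandermonde ξ (fun i => hermP i)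
      (fun i => (hermP_monic i).2) (fun i => (hermP_monic i).1)]
  simp only [e]
  rw [volume_pi, h]
  simp only [hermP_norm]
  have h2 : ∀ σ : Equiv.Perm (Fin p), ∑ τ : Equiv.Perm (Fin p),
        (((Equiv.Perm.sign σ : ℤ) : ℝ) * ((Equiv.Perm.sign τ : ℤ) : ℝ)) *
          ∏ i, (if ((σ i : Fin p) : ℕ) = (τ i : Fin p) then
            (((σ i : Fin p) : ℕ).factorial : ℝ) * √π / 2 ^ ((σ i : Fin p) : ℕ) else 0) =
      ∏ i : Fin p, (((i : ℕ).factorial : ℝ) * √π / 2 ^ (i : ℕ)) := by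
    intro σ
    rw [Finset.sum_eq_single σ]
    · simp only [if_true]
      rw [Equiv.prod_comp σ (fun i : Fin p => (((i : ℕ).factorial : ℝ) * √π / 2 ^ (i : ℕ)))]
      have : (((Equiv.Perm.sign σ : ℤ) : ℝ) * ((Equiv.Perm.sign σ : ℤ) : ℝ)) = 1 := by
        rw [← Int.cast_mul]
        rcases Int.units_eq_one_or (Equiv.Perm.sign σ) with h | h <;> simp [h]
      rw [this, one_mul]
    · intro τ _ hτ
      have : ∃ i, σ i ≠ τ i := by
        by_contra hcon
        push Not at hcon
        exact hτ (Equiv.ext fun i => (hcon i).symm)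
      obtain ⟨i, hi⟩ := this
      rw [Finset.prod_eq_zero (Finset.mem_univ i), mul_zero]
      rw [if_neg]
      intro h; exact hi (Fin.ext h)
    · simp
  rw [Finset.sum_congr rfl fun σ _ => h2 σ, Finset.sum_const, Finset.card_univ, Fintype.card_perm,
    Fintype.card_fin, nsmul_eq_mul]

def xiP (x : ℝ) (h : ℕ) : ℝ := ((h:ℝ) - x) / √(2*x)

def Po (x : ℝ) : Measure ℕ := ProbabilityTheory.poissonMeasure x.toNNReal

instance (x : ℝ) : IsProbabilityMeasure (Po x) := by unfold Po; infer_instance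

lemma charFun_Po (x t : ℝ) (hx : 0 < x) : charFun ((Po x).map (xiP x)) t =
    Complex.exp (x * (Complex.exp ((t/√(2*x) : ℝ) * Complex.I) - 1 - ((t/√(2*x) : ℝ) * Complex.I))) := by
  have h1 := ProbabilityTheory.charFun_map_cast_poissonMeasure x.toNNReal (t/√(2*x))
  rw [charFun_apply_real, integral_map .of_discrete (by fun_prop)] at h1
  rw [charFun_apply_real, integral_map .of_discrete (by fun_prop)]
  have h2 : ∀ h : ℕ, Complex.exp (t * (xiP x h : ℝ) * Complex.I) =
      Complex.exp (((t/√(2*x) : ℝ) : ℂ) * ((h:ℝ):ℂ) * Complex.I) * Complex.exp (-(x * ((t/√(2*x) : ℝ) * Complex.I))) := by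
    intro h
    rw [← Complex.exp_add]
    congr 1
    simp only [xiP]
    push_cast
    ring
  simp_rw [h2]
  rw [integral_mul_const]
  unfold Po
  rw [h1, ← Complex.exp_add, Real.coe_toNNReal _ hx.le]
  congr 1
  ring

lemma charFun_lim (x : ℕ → ℝ) (hx : Tendsto x atTop atTop) (t : ℝ) :
    Tendsto (fun n => charFun ((Po (x n)).map (xiP (x n))) t) atTop
      (𝓝 (charFun (ProbabilityTheory.gaussianReal 0 (1/2)) t)) := by
  rw [ProbabilityTheory.charFun_gaussianReal]
  have hs : Tendsto (fun n => √(2 * x n)) atTop atTop :=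
    Real.tendsto_sqrt_atTop.comp (hx.const_mul_atTop (by norm_num))
  have hpos : ∀ᶠ n in atTop, 0 < x n := hx.eventually_gt_atTop 0
  have hb : ∀ᶠ n in atTop, |t| ≤ √(2 * x n) := hs.eventually_ge_atTop _
  have key : Tendsto (fun n => (x n : ℂ) * (Complex.exp ((t/√(2*x n) : ℝ) * Complex.I) - 1 - ((t/√(2*x n) : ℝ) * Complex.I))) atTop (𝓝 (t * (0:ℝ) * Complex.I - (1/2 : NNReal) * t ^ 2 / 2)) := by
    rw [tendsto_iff_norm_sub_tendsto_zero]
    have hz : Tendsto (fun n => |t|^3/6 / √(2 * x n)) atTop (𝓝 0) := Tendsto.const_div_atTop hs _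
    refine squeeze_zero' (Eventually.of_forall fun n => norm_nonneg _) ?_ hz
    filter_upwards [hpos, hb] with n h0 h1
    set u : ℝ := t/√(2*x n) with hu
    have hsp : 0 < √(2 * x n) := by positivity
    have hsq : √(2 * x n) ^ 2 = 2 * x n := Real.sq_sqrt (by positivity)
    have hu1 : |u| ≤ 1 := by rw [hu, abs_div, abs_of_pos hsp, div_le_one hsp]; exact h1
    have nu : ‖(u:ℂ) * Complex.I‖ = |u| := by simp
    have hB := Complex.exp_bound' (x := (u:ℂ) * Complex.I) (n := 3) (by rw [nu]; push_cast; linarith)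
    have hxu : x n * u^2 = t^2/2 := by
      rw [hu, div_pow, hsq]; field_simp
    have hxuC : (x n : ℂ) * (u:ℂ)^2 = t^2/2 := by exact_mod_cast hxu
    have e : (x n : ℂ) * (Complex.exp (u * Complex.I) - 1 - (u * Complex.I)) - (t * (0:ℝ) * Complex.I - (1/2 : NNReal) * t ^ 2 / 2) = x n * (Complex.exp (u * Complex.I) - ∑ m ∈ Finset.range 3, ((u:ℂ) * Complex.I)^m / (m.factorial : ℂ)) := by
      simp only [Finset.sum_range_succ, Finset.sum_range_zero, Nat.factorial, mul_pow, Complex.I_sq]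
      push_cast
      linear_combination (-1/2 : ℂ) * hxuC
    rw [e, norm_mul, Complex.norm_real, Real.norm_of_nonneg h0.le]
    rw [nu] at hB
    calc x n * _ ≤ x n * (|u|^3 / (Nat.factorial 3 : ℝ) * 2) := mul_le_mul_of_nonneg_left hB h0.le
      _ = (x n * u^2) * |u| / 3 := by
        have h6 : ((Nat.factorial 3 : ℕ) : ℝ) = 6 := by norm_num [Nat.factorial]
        rw [h6, ← sq_abs u]; ring
      _ = |t|^3/6 / √(2 * x n) := by
        rw [hxu, hu, abs_div, abs_of_pos hsp, ← sq_abs t]; ring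
  refine ((Complex.continuous_exp.tendsto _).comp key).congr' ?_
  filter_upwards [hpos] with n h0
  rw [charFun_Po _ _ h0]; rfl

lemma tail_lim (x : ℕ → ℝ) (hx : Tendsto x atTop atTop) (t : ℝ) :
    Tendsto (fun n => (Po (x n)) {h | t ≤ xiP (x n) h}) atTop
      (𝓝 (ProbabilityTheory.gaussianReal 0 (1/2) (Set.Ici t))) := by
  have hP : ∀ n, IsProbabilityMeasure ((Po (x n)).map (xiP (x n))) := fun n =>
    Measure.isProbabilityMeasure_map .of_discrete
  let μ : ℕ → ProbabilityMeasure ℝ := fun n => ⟨(Po (x n)).map (xiP (x n)), hP n⟩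
  let μ₀ : ProbabilityMeasure ℝ := ⟨ProbabilityTheory.gaussianReal 0 (1/2), inferInstance⟩
  have h1 : Tendsto μ atTop (𝓝 μ₀) :=
    ProbabilityMeasure.tendsto_of_tendsto_charFun (fun t => charFun_lim x hx t)
  have : NullSingletonClass (ProbabilityTheory.gaussianReal 0 (1/2)) := ProbabilityTheory.nullSingletonClass_gaussianReal (by norm_num)
  have h2 := ProbabilityMeasure.tendsto_measure_of_null_frontier_of_tendsto' h1 (E := Set.Ici t)
    (by rw [frontier_Ici]; exact measure_singleton (μ := ProbabilityTheory.gaussianReal 0 (1/2)) t)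
  refine h2.congr fun n => ?_
  change ((Po (x n)).map (xiP (x n))) (Set.Ici t) = _
  rw [Measure.map_apply .of_discrete measurableSet_Ici]
  rfl

lemma exp_moment (x : ℝ) (u : ℝ) (hx : 0 < x) :
    Integrable (fun h : ℕ => exp (u * h)) (Po x) ∧ ∫ h : ℕ, exp (u * h) ∂(Po x) = exp (x * (exp u - 1)) := by
  have hs : HasSum (fun n : ℕ => exp (-x) * ((x * exp u)^n / (n.factorial:ℝ))) (exp (-x) * exp (x * exp u)) := by
    have := NormedSpace.expSeries_div_hasSum_exp (x * exp u)
    rw [← Real.exp_eq_exp_ℝ] at this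
    exact this.mul_left _
  have he : ∀ n : ℕ, exp (-x) * x ^ n / (n.factorial:ℝ) * exp (u * n) = exp (-x) * ((x * exp u)^n / (n.factorial:ℝ)) := by
    intro n
    rw [mul_pow, mul_comm u, Real.exp_nat_mul]; ring
  constructor
  · rw [Po, ProbabilityTheory.integrable_poissonMeasure_iff]
    simp only [Real.coe_toNNReal _ hx.le, Real.norm_eq_abs, Real.abs_exp, he]
    exact hs.summable
  · rw [Po, ProbabilityTheory.integral_poissonMeasure]
    simp only [Real.coe_toNNReal _ hx.le, smul_eq_mul, he]
    rw [hs.tsum_eq, ← Real.exp_add]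
    congr 1; ring

lemma tail_bound (x : ℝ) (hx : 1/2 ≤ x) (t : ℝ) :
    (Po x) {h | t ≤ xiP x h} ≤ ENNReal.ofReal (exp 1 * exp (-t)) := by
  have h0 : 0 < x := by linarith
  have hs1 : 1 ≤ √(2*x) := by rw [Real.one_le_sqrt]; linarith
  have hsp : 0 < √(2*x) := by linarith
  set u : ℝ := 1/√(2*x) with hu
  have hu1 : |u| ≤ 1 := by rw [hu, abs_of_pos (by positivity), div_le_one hsp]; exact hs1
  have hxi : ∀ h, exp (xiP x h) = exp (u * h) * exp (-(x * u)) := by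
    intro h; rw [← Real.exp_add, xiP, hu]; congr 1; ring
  obtain ⟨hI, hE⟩ := exp_moment x u h0
  have hI' : Integrable (fun h => exp (xiP x h)) (Po x) := by
    simp_rw [hxi]; exact hI.mul_const _
  have hE' : ∫ h, exp (xiP x h) ∂(Po x) ≤ exp 1 := by
    simp_rw [hxi]
    rw [integral_mul_const, hE, ← Real.exp_add]
    apply Real.exp_le_exp.2
    have := (abs_le.1 (Real.abs_exp_sub_one_sub_id_le hu1)).2
    have hxu : x * u^2 = 1/2 := by
      rw [hu, div_pow, Real.sq_sqrt (by positivity)]; field_simp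
    nlinarith
  have hM := mul_meas_ge_le_integral_of_nonneg (Eventually.of_forall fun h => (exp_pos (xiP x h)).le) hI' (exp t)
  simp only [Real.exp_le_exp] at hM
  rw [ENNReal.le_ofReal_iff_toReal_le (measure_ne_top _ _) (by positivity)]
  have : (Po x).real {h | t ≤ xiP x h} ≤ exp 1 * exp (-t) := by
    rw [Real.exp_neg, ← div_eq_mul_inv, le_div_iff₀ (exp_pos t)]
    linarith
  exact this

def posK (k : ℕ) (y : ℝ) : ℝ := if 0 ≤ y then y ^ k else 0

lemma posK_nonneg (k : ℕ) (y : ℝ) : 0 ≤ posK k y := by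
  unfold posK; split_ifs with h
  · positivity
  · exact le_rfl

lemma posK_meas (k : ℕ) : Measurable (posK k) :=
  Measurable.ite measurableSet_Ici (by fun_prop) (by fun_prop)

lemma layer {α : Type*} [MeasurableSpace α] (ν : Measure α) (f : α → ℝ) (hf : Measurable f) (s : ℝ) (k : ℕ) (hk : 1 ≤ k) :
    ∫⁻ a, ENNReal.ofReal (posK k (f a - s)) ∂ν = ENNReal.ofReal k *
      ∫⁻ t in Set.Ioi 0, ν {a | s + t ≤ f a} * ENNReal.ofReal (t ^ ((k:ℝ) - 1)) := by
  have h := lintegral_rpow_eq_lintegral_meas_le_mul ν (f := fun a => max (f a - s) 0)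
    (Eventually.of_forall fun a => le_max_right _ _) (by fun_prop) (p := k) (by exact_mod_cast hk)
  convert! h using 1
  · congr 1; ext a
    rw [Real.rpow_natCast, posK]
    split_ifs with h0
    · rw [max_eq_left h0]
    · rw [max_eq_right (by linarith), zero_pow (by omega)]
  · congr 1
    refine setLIntegral_congr_fun measurableSet_Ioi fun t ht => ?_
    congr 2
    ext a
    have : (0:ℝ) < t := ht
    simp only [Set.mem_ofPred_eq, le_max_iff]
    constructor
    · intro h; left; linarith
    · rintro (h | h) <;> linarith

lemma posK_zero_lint {α : Type*} [MeasurableSpace α] (ν : Measure α) (f : α → ℝ) (hf : Measurable f) (s : ℝ) :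
    ∫⁻ a, ENNReal.ofReal (posK 0 (f a - s)) ∂ν = ν {a | s ≤ f a} := by
  rw [← lintegral_indicator_one (measurableSet_le measurable_const hf)]
  congr 1; ext a
  simp only [posK, Set.indicator, Set.mem_ofPred_eq, sub_nonneg, pow_zero]
  split_ifs <;> simp

lemma posK_int_gauss (k : ℕ) (s : ℝ) :
    Integrable (fun y => posK k (y - s)) (ProbabilityTheory.gaussianReal 0 (1/2)) := by
  have h1 : MemLp (fun y : ℝ => y - s) k (ProbabilityTheory.gaussianReal 0 (1/2)) := by
    have := ProbabilityTheory.memLp_id_gaussianReal (μ := 0) (v := 1/2) (k : NNReal)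
    have := this.sub (memLp_const s)
    exact this
  have h2 := h1.integrable_norm_pow'
  refine h2.mono' ((posK_meas k).comp (by fun_prop)).aestronglyMeasurable (Eventually.of_forall fun y => ?_)
  rw [Real.norm_of_nonneg (posK_nonneg _ _)]
  unfold posK; split_ifs
  · rw [Real.norm_of_nonneg (by assumption)]
  · positivity

lemma lint_lim (x : ℕ → ℝ) (hx : Tendsto x atTop atTop) (s : ℝ) (k : ℕ) :
    Tendsto (fun n => ∫⁻ h, ENNReal.ofReal (posK k (xiP (x n) h - s)) ∂(Po (x n))) atTop
      (𝓝 (∫⁻ y, ENNReal.ofReal (posK k (y - s)) ∂(ProbabilityTheory.gaussianReal 0 (1/2)))) := by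
  rcases Nat.eq_zero_or_pos k with rfl | hk
  · simp_rw [posK_zero_lint _ _ (Measurable.of_discrete), posK_zero_lint _ _ (measurable_id')]
    exact tail_lim x hx s
  simp_rw [layer _ _ (Measurable.of_discrete) s k hk, layer _ _ measurable_id' s k hk]
  refine ENNReal.Tendsto.const_mul ?_ (Or.inr ENNReal.ofReal_ne_top)
  refine tendsto_lintegral_filter_of_dominated_convergence
    (fun t => ENNReal.ofReal (exp 1 * exp (-(s+t))) * ENNReal.ofReal (t ^ ((k:ℝ) - 1))) ?_ ?_ ?_ ?_
  · refine Eventually.of_forall fun n => ?_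
    refine Measurable.mul ?_ (by fun_prop)
    have hanti : Antitone (fun t : ℝ => (Po (x n)) {a | s + t ≤ xiP (x n) a}) := by
      intro t t' htt
      refine measure_mono fun a ha => ?_
      simp only [Set.mem_ofPred_eq] at ha ⊢
      linarith
    exact hanti.measurable
  · filter_upwards [hx.eventually_ge_atTop (1/2)] with n hn
    refine Eventually.of_forall fun t => ?_
    gcongr
    exact tail_bound _ hn _
  · have hG := (Real.GammaIntegral_convergent (s := k) (by exact_mod_cast hk)).const_mul (exp 1 * exp (-s))
    have := hG.lintegral_lt_top
    refine ne_of_lt (lt_of_eq_of_lt ?_ this)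
    refine setLIntegral_congr_fun measurableSet_Ioi fun t ht => ?_
    rw [← ENNReal.ofReal_mul (by positivity)]
    congr 1
    rw [neg_add, Real.exp_add]; ring
  · refine Eventually.of_forall fun t => ?_
    refine ENNReal.Tendsto.mul_const ?_ (Or.inr ENNReal.ofReal_ne_top)
    exact tail_lim x hx (s+t)

/-- limiting moments -/
def aLim (s : ℝ) (k : ℕ) : ℝ := (√π)⁻¹ * ∫ y in Set.Ici s, (y - s)^k * exp (-(y^2))

lemma int_gauss_eq (s : ℝ) (k : ℕ) : ∫ y, posK k (y - s) ∂(ProbabilityTheory.gaussianReal 0 (1/2)) = aLim s k := by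
  rw [ProbabilityTheory.integral_gaussianReal_eq_integral_smul (by norm_num), aLim,
    ← integral_indicator measurableSet_Ici, ← integral_const_mul]
  congr 1; ext y
  have h2 : (2:ℝ) * π * ((1/2 : NNReal):ℝ) = π := by push_cast; ring
  have h3 : (2:ℝ) * ((1/2 : NNReal):ℝ) = 1 := by push_cast; ring
  rw [ProbabilityTheory.gaussianPDFReal, h2, h3]
  simp only [Set.indicator, Set.mem_Ici, posK, sub_nonneg, smul_eq_mul, sub_zero, div_one]
  split_ifs <;> ring

lemma int_lim (x : ℕ → ℝ) (hx : Tendsto x atTop atTop) (s : ℝ) (k : ℕ) :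
    Tendsto (fun n => ∫ h, posK k (xiP (x n) h - s) ∂(Po (x n))) atTop (𝓝 (aLim s k)) := by
  rw [← int_gauss_eq]
  rw [integral_eq_lintegral_of_nonneg_ae (Eventually.of_forall fun _ => posK_nonneg _ _) (posK_int_gauss k s).aestronglyMeasurable]
  have := (ENNReal.tendsto_toReal (posK_int_gauss k s).lintegral_lt_top.ne).comp (lint_lim x hx s k)
  refine this.congr fun n => ?_
  rw [integral_eq_lintegral_of_nonneg_ae (Eventually.of_forall fun _ => posK_nonneg _ _) .of_discrete]
  rfl

lemma int_poly (x : ℝ) (hx : 0 < x) (P : Polynomial ℝ) : Integrable (fun h : ℕ => P.eval (h:ℝ)) (Po x) := by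
  induction P using Polynomial.induction_on' with
  | add P Q hP hQ => simp only [Polynomial.eval_add]; exact hP.add hQ
  | monomial k a =>
    simp only [Polynomial.eval_monomial]
    refine Integrable.const_mul ?_ a
    have h1 := ((exp_moment x 1 hx).1).const_mul (k.factorial : ℝ)
    refine h1.mono' .of_discrete (Eventually.of_forall fun h => ?_)
    rw [Real.norm_of_nonneg (by positivity), one_mul]
    have := Real.pow_div_factorial_le_exp (h:ℝ) (by positivity) k
    rwa [div_le_iff₀ (by positivity), mul_comm] at this

lemma int_gen (x : ℝ) (hx : 0 < x) (a b : ℝ) (Q : Polynomial ℝ) (S : Set ℕ) [DecidablePred (· ∈ S)] :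
    Integrable (fun h : ℕ => if h ∈ S then Q.eval (a * h + b) else 0) (Po x) := by
  have h := (int_poly x hx (Q.comp (Polynomial.C a * Polynomial.X + Polynomial.C b))).indicator (s := S) (.of_discrete)
  refine h.congr (Eventually.of_forall fun h => ?_)
  simp [Set.indicator]

lemma int_A (x : ℝ) (hx : 0 < x) (s e : ℝ) (m j : ℕ) :
    Integrable (fun h : ℕ => posK j (xiP x h - s) * ∏ k ∈ Finset.range m, (xiP x h - s + ((k:ℝ)+1)*e)) (Po x) := by
  classical
  have h := int_gen x hx (1/√(2*x)) (-x/√(2*x) - s)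
    (Polynomial.X^j * ∏ k ∈ Finset.range m, (Polynomial.X + Polynomial.C (((k:ℝ)+1)*e))) {h | 0 ≤ xiP x h - s}
  refine h.congr (Eventually.of_forall fun h => ?_)
  have : 1/√(2*x) * (h:ℝ) + (-x/√(2*x) - s) = xiP x h - s := by rw [xiP]; ring
  simp only [this, posK, Set.mem_ofPred_eq, Polynomial.eval_mul, Polynomial.eval_prod, Polynomial.eval_pow, Polynomial.eval_X, Polynomial.eval_add, Polynomial.eval_C]
  split_ifs <;> simp

lemma A_lim (x : ℕ → ℝ) (hx : Tendsto x atTop atTop) (s : ℝ) (m : ℕ) : ∀ j : ℕ,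
    Tendsto (fun n => ∫ h, posK j (xiP (x n) h - s) * ∏ k ∈ Finset.range m, (xiP (x n) h - s + ((k:ℝ)+1)*(1/√(2*x n))) ∂(Po (x n))) atTop (𝓝 (aLim s (j+m))) := by
  induction m with
  | zero => intro j; simpa using int_lim x hx s j
  | succ m ih =>
    intro j
    have he : Tendsto (fun n => 1/√(2 * x n)) atTop (𝓝 0) := Tendsto.const_div_atTop
      (Real.tendsto_sqrt_atTop.comp (hx.const_mul_atTop (by norm_num))) _
    have h1 := (ih (j+1)).add (((ih j).mul he).const_mul ((m:ℝ)+1))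
    rw [mul_zero, mul_zero, add_zero, show j+1+m = j+(m+1) by ring] at h1
    refine h1.congr' ?_
    filter_upwards [hx.eventually_gt_atTop 0] with n hn
    rw [mul_comm (∫ _, _ ∂_) (1/√(2 * x n)), ← integral_const_mul, ← integral_const_mul, ← integral_add (int_A _ hn _ _ _ _)
      (((int_A _ hn _ _ _ _).const_mul _).const_mul _)]
    congr 1; ext h
    rw [Finset.prod_range_succ]
    have : posK (j+1) (xiP (x n) h - s) = posK j (xiP (x n) h - s) * (xiP (x n) h - s) := by
      unfold posK; split_ifs
      · rw [pow_succ]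
      · simp
    rw [this]; ring

lemma diagB_inj {p : ℕ} : Function.Injective (fun b : {b : Fin p → ℕ // StrictMono b} => diagB b.1) := by
  rintro ⟨b, hb⟩ ⟨c, hc⟩ h
  simp only at h
  apply Subtype.ext
  funext i
  have h1 := rowLen_diagB hb i
  have h2 := rowLen_diagB hc i
  rw [h, h2] at h1
  have := le_b hb i
  have := le_b hc i
  simp only
  omega

lemma diagB_surj {p : ℕ} (μ : YoungDiagram) (h : μ.rowLen p = 0) :
    ∃ b : {b : Fin p → ℕ // StrictMono b}, diagB b.1 = μ := by
  have hb : StrictMono (fun i : Fin p => μ.rowLen (p-1-i) + (i:ℕ)) := by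
    intro i j hij
    have h1 : μ.rowLen (p-1-i) ≤ μ.rowLen (p-1-j) := μ.rowLen_anti _ _ (by
      have : (i:ℕ) < j := hij
      omega)
    have : (i:ℕ) < j := hij
    simp only
    omega
  refine ⟨⟨_, hb⟩, ?_⟩
  ext ⟨k, j⟩
  rw [YoungDiagram.mem_cells, YoungDiagram.mem_cells, YoungDiagram.mem_iff_lt_rowLen, YoungDiagram.mem_iff_lt_rowLen]
  by_cases hk : p ≤ k
  · rw [rowLen_diagB_zero _ _ hk]
    have := μ.rowLen_anti _ _ hk
    omega
  · have h1 := rowLen_diagB hb (⟨p-1-k, by omega⟩ : Fin p)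
    simp only at h1
    have e : p - 1 - (p-1-k) = k := by omega
    rw [e] at h1
    simp only
    rw [h1]
    omega

lemma tsum_diag {p : ℕ} (F : YoungDiagram → ℝ) (hF : ∀ μ, numSSYT μ p = 0 → F μ = 0) :
    ∑' μ, F μ = ∑' b : Fin p → ℕ, {b | StrictMono b}.indicator (fun b => F (diagB b)) b := by
  rw [← tsum_subtype {b : Fin p → ℕ | StrictMono b} (fun b => F (diagB b))]
  symm
  refine Function.Injective.tsum_eq (g := fun b : {b : Fin p → ℕ | StrictMono b} => diagB b.1) diagB_inj ?_
  intro μ hμ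
  refine diagB_surj μ ?_
  by_contra h
  exact hμ (hF μ (numSSYT_zero μ p h))

lemma tsum_symm {p : ℕ} (K : (Fin p → ℕ) → ℝ) (hK : Summable K)
    (hsym : ∀ (σ : Equiv.Perm (Fin p)) h, K (h ∘ σ) = K h)
    (hinj : ∀ h, ¬ Function.Injective h → K h = 0) :
    ∑' b : Fin p → ℕ, {b | StrictMono b}.indicator K b = (p.factorial:ℝ)⁻¹ * ∑' h, K h := by
  classical
  have key : ∀ h, K h = ∑ σ : Equiv.Perm (Fin p), {b | StrictMono b}.indicator K (h ∘ σ) := by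
    intro h
    by_cases hi : Function.Injective h
    · have hs : StrictMono (h ∘ Tuple.sort h) :=
        (Tuple.monotone_sort h).strictMono_of_injective (hi.comp (Equiv.injective _))
      rw [Finset.sum_eq_single (Tuple.sort h)]
      · rw [Set.indicator_of_mem (by exact hs), hsym]
      · intro τ _ hτ
        apply Set.indicator_of_notMem
        intro ht
        apply hτ
        have ht : StrictMono (h ∘ τ) := ht
        have := (StrictMono.range_inj ht hs).1 (by
          rw [Set.range_comp, Set.range_comp, Equiv.range_eq_univ, Equiv.range_eq_univ])
        ext i
        have := congrFun this i
        exact congrArg _ (hi this)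
      · simp
    · rw [hinj h hi, Finset.sum_eq_zero]
      intro σ _
      rw [Set.indicator_apply]
      split_ifs
      · rw [hsym, hinj h hi]
      · rfl
  have hS : Summable ({b : Fin p → ℕ | StrictMono b}.indicator K) := hK.indicator _
  have hS' : ∀ σ : Equiv.Perm (Fin p), Summable (fun h => {b : Fin p → ℕ | StrictMono b}.indicator K (h ∘ σ)) := by
    intro σ
    exact (Equiv.summable_iff (Equiv.arrowCongr σ.symm (Equiv.refl ℕ)) (f := {b : Fin p → ℕ | StrictMono b}.indicator K)).2 hS
  have : ∑' h, K h = ∑ σ : Equiv.Perm (Fin p), ∑' h, {b : Fin p → ℕ | StrictMono b}.indicator K (h ∘ σ) := by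
    rw [← Summable.tsum_finsetSum (fun σ _ => hS' σ)]
    exact tsum_congr key
  have h2 : ∀ σ : Equiv.Perm (Fin p), ∑' h, {b : Fin p → ℕ | StrictMono b}.indicator K (h ∘ σ) = ∑' h, {b : Fin p → ℕ | StrictMono b}.indicator K h := by
    intro σ
    exact Equiv.tsum_eq (Equiv.arrowCongr σ.symm (Equiv.refl ℕ)) ({b : Fin p → ℕ | StrictMono b}.indicator K)
  rw [this, Finset.sum_congr rfl (fun σ _ => h2 σ)]
  simp only [Finset.sum_const, Finset.card_univ, Fintype.card_perm, Fintype.card_fin, nsmul_eq_mul]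
  rw [← mul_assoc, inv_mul_cancel₀ (by positivity), one_mul]

lemma hasSum_int {α : Type*} [MeasurableSpace α] [Countable α] [MeasurableSingletonClass α] (μ : Measure α) [IsFiniteMeasure μ]
    (G : α → ℝ) (hG : Integrable G μ) : HasSum (fun a => μ.real {a} * G a) (∫ a, G a ∂μ) := by
  have e := Measure.sum_smul_dirac μ
  have h1 : Integrable G (Measure.sum fun a => μ {a} • Measure.dirac a) := by rwa [e]
  have h2 := (integrable_sum_dirac_iff (c := fun a => μ {a}) (x := fun a => a) (fun a => measure_ne_top _ _)).1 h1
  have h3 := hasSum_integral_sum_dirac (c := fun a => μ {a}) (x := fun a => a) (fun a => measure_ne_top _ _) h2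
  rw [e] at h3
  exact h3

lemma pi_Po_real {p : ℕ} (x : ℝ) (hx : 0 < x) (h : Fin p → ℕ) :
    (Measure.pi fun _ : Fin p => Po x).real {h} = ∏ i, (exp (-x) * x^(h i) / ((h i).factorial:ℝ)) := by
  rw [Measure.real, Measure.pi_singleton, ENNReal.toReal_prod]
  refine Finset.prod_congr rfl fun i _ => ?_
  have := ProbabilityTheory.poissonMeasure_real_singleton x.toNNReal (h i)
  rw [Real.coe_toNNReal _ hx.le] at this
  exact this

lemma vdm_affine {p : ℕ} (v : Fin p → ℝ) (r c : ℝ) :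
    vdm (fun i => r * v i + c) = r ^ (∑ i : Fin p, (i:ℕ)) * vdm v := by
  have h1 : ∀ i j : Fin p, r * v i + c - (r * v j + c) = r * (v i - v j) := by intro i j; ring
  simp only [vdm, h1, Finset.prod_mul_distrib, Finset.prod_const]
  rw [Finset.prod_pow_eq_pow_sum]
  congr 2
  simp only [Fin.card_Ioi]
  rw [← Equiv.sum_comp Fin.revPerm]
  refine Finset.sum_congr rfl fun i _ => ?_
  simp only [Fin.revPerm_apply, Fin.val_rev]
  omega

def Wf (x s : ℝ) (m : ℕ) (h : ℕ) : ℝ :=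
  (if 0 ≤ xiP x h - s then 1 else 0) * ∏ k ∈ Finset.range m, (xiP x h - s + ((k:ℝ)+1)*(1/√(2*x)))

def Gf {p : ℕ} (x s : ℝ) (m : ℕ) (h : Fin p → ℕ) : ℝ :=
  vdm (fun i => xiP x (h i) - s)^2 * ∏ i, Wf x s m (h i)

def Af (x s : ℝ) (m j : ℕ) : ℝ :=
  ∫ h, posK j (xiP x h - s) * ∏ k ∈ Finset.range m, (xiP x h - s + ((k:ℝ)+1)*(1/√(2*x))) ∂(Po x)

lemma phiW (x s : ℝ) (m i j h : ℕ) : (xiP x h - s)^i * (xiP x h - s)^j * Wf x s m h =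
    posK (i+j) (xiP x h - s) * ∏ k ∈ Finset.range m, (xiP x h - s + ((k:ℝ)+1)*(1/√(2*x))) := by
  unfold Wf posK
  split_ifs
  · rw [pow_add]; ring
  · simp

lemma Gf_int {p : ℕ} (x s : ℝ) (hx : 0 < x) (m : ℕ) :
    Integrable (Gf (p := p) x s m) (Measure.pi fun _ => Po x) ∧
    ∫ h, Gf (p := p) x s m h ∂(Measure.pi fun _ => Po x) =
      ∑ σ : Equiv.Perm (Fin p), ∑ τ : Equiv.Perm (Fin p), (((Equiv.Perm.sign σ : ℤ):ℝ) * ((Equiv.Perm.sign τ : ℤ):ℝ)) *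
        ∏ i, Af x s m ((σ i : ℕ) + (τ i : ℕ)) := by
  have h := andreief (Po x) (fun (j : Fin p) (h : ℕ) => (xiP x h - s)^(j:ℕ)) (Wf x s m) (by
    intro i j
    simp only [phiW]
    exact int_A x hx s _ m _)
  simp only [phiW] at h
  have e : ∀ h : Fin p → ℕ, Gf x s m h = (Matrix.of fun i j : Fin p => (xiP x (h i) - s)^(j:ℕ)).det^2 * ∏ i, Wf x s m (h i) := by
    intro h
    rw [Gf, vdm_sq]; rfl
  rw [funext e]
  exact h

lemma Gf_symm {p : ℕ} (x s : ℝ) (m : ℕ) (σ : Equiv.Perm (Fin p)) (h : Fin p → ℕ) :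
    Gf x s m (h ∘ σ) = Gf x s m h := by
  unfold Gf
  rw [vdm_sq, vdm_sq]
  congr 1
  · have : Matrix.vandermonde (fun i => xiP x ((h ∘ σ) i) - s) = (Matrix.vandermonde (fun i => xiP x (h i) - s)).submatrix σ id := rfl
    rw [this, Matrix.det_permute, mul_pow]
    have : (((Equiv.Perm.sign σ : ℤˣ) : ℤ) : ℝ)^2 = 1 := by
      rcases Int.units_eq_one_or (Equiv.Perm.sign σ) with h | h <;> rw [h] <;> norm_num
    rw [this, one_mul]
  · exact Equiv.prod_comp σ (fun i => Wf x s m (h i))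

lemma Gf_inj {p : ℕ} (x s : ℝ) (m : ℕ) (h : Fin p → ℕ) (hh : ¬ Function.Injective h) : Gf x s m h = 0 := by
  unfold Gf
  have : vdm (fun i => xiP x (h i) - s) = 0 := by
    rw [← sq_eq_zero_iff, vdm_sq, sq_eq_zero_iff]
    by_contra hne
    rw [← ne_eq, Matrix.det_vandermonde_ne_zero_iff] at hne
    apply hh
    intro i j hij
    exact hne (by simp only [hij])
  rw [this]; ring

lemma Epois_eq (p q n : ℕ) (hp : 1 ≤ p) (hpq : p ≤ q) (hqn : q ≤ n) (s x : ℝ) (hx : 0 < x)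
    (hn : (n:ℝ) - p = x + s * √(2*x)) :
    Epois x p (fun lam => indSup n p lam * (Hstrip n p q lam : ℝ)) =
      (2 ^ (∑ i : Fin p, (i:ℕ)) * (∏ i : Fin p, ((i:ℕ).factorial:ℝ))⁻¹ * √(2*x) ^ (p * (q-p))) *
       ((p.factorial:ℝ)⁻¹ * ∑ σ : Equiv.Perm (Fin p), ∑ τ : Equiv.Perm (Fin p), (((Equiv.Perm.sign σ : ℤ):ℝ) * ((Equiv.Perm.sign τ : ℤ):ℝ)) *
        ∏ i, Af x s (q-p) ((σ i : ℕ) + (τ i : ℕ))) := by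
  obtain ⟨hI, hE⟩ := Gf_int (p := p) x s hx (q-p)
  have hS := hasSum_int _ _ hI
  rw [← hE, ← hS.tsum_eq]
  set c : ℝ := 2 ^ (∑ i : Fin p, (i:ℕ)) * (∏ i : Fin p, ((i:ℕ).factorial:ℝ))⁻¹ * √(2*x) ^ (p * (q-p)) with hc
  have hsp : 0 < √(2*x) := by positivity
  have hsq : √(2*x)^2 = 2*x := Real.sq_sqrt (by positivity)
  rw [← tsum_symm _ hS.summable, ← tsum_mul_left]
  · rw [Epois, tsum_diag (p := p)]
    · refine tsum_congr fun b => ?_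
      by_cases hb : StrictMono b
      swap
      · rw [Set.indicator_of_notMem (by exact hb), Set.indicator_of_notMem (by exact hb), mul_zero]
      rw [Set.indicator_of_mem (by exact hb), Set.indicator_of_mem (by exact hb)]
      rw [weight_diagB hb hp x hx, indSup_diagB hb, pi_Po_real x hx]
      have hxi : ∀ h : ℕ, (h:ℝ) = √(2*x) * (xiP x h - s) + ((n:ℝ) - p) := by
        intro h; rw [hn, xiP]; field_simp; ring
      have hcond : ∀ h : ℕ, n - p ≤ h ↔ 0 ≤ xiP x h - s := by
        intro h
        have h1 := hxi h
        have h2 : ((n - p : ℕ):ℝ) = (n:ℝ) - p := by rw [Nat.cast_sub (by omega)]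
        rw [← Nat.cast_le (α := ℝ), h2]
        constructor
        · intro h3
          by_contra h4
          push Not at h4
          nlinarith
        · intro h3
          nlinarith [mul_nonneg hsp.le h3]
      have hv : vdm (fun i => (b i:ℝ)) = √(2*x) ^ (∑ i : Fin p, (i:ℕ)) * vdm (fun i => xiP x (b i) - s) := by
        rw [← vdm_affine _ _ ((n:ℝ)-p)]
        congr 1; ext i; exact hxi (b i)
      by_cases hall : ∀ i, n - p ≤ b i
      · rw [if_pos hall, Hstrip_diagB hb n q hpq hqn hall, hv, Gf]
        have hW : ∀ i, Wf x s (q-p) (b i) * √(2*x)^(q-p) = ∏ k ∈ Finset.range (q-p), ((b i:ℝ) - ((n:ℝ) - p) + (k+1)) := by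
          intro i
          rw [Wf, if_pos ((hcond _).1 (hall i)), one_mul]
          nth_rw 2 [← Finset.card_range (q-p)]
          rw [← Finset.prod_const, ← Finset.prod_mul_distrib]
          refine Finset.prod_congr rfl fun k _ => ?_
          have := hxi (b i)
          have e1 : (1/√(2*x)) * √(2*x) = 1 := by field_simp
          linear_combination (-1:ℝ) * this + ((k:ℝ)+1) * e1
        rw [← Finset.prod_congr rfl (fun i _ => hW i), Finset.prod_mul_distrib, Finset.prod_const, Finset.card_univ, Fintype.card_fin, ← pow_mul]
        have h2x : (√(2*x) ^ (∑ i : Fin p, (i:ℕ)))^2 = 2 ^ (∑ i : Fin p, (i:ℕ)) * x ^ (∑ i : Fin p, (i:ℕ)) := by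
          rw [pow_right_comm, hsq, mul_pow]
        rw [mul_pow, h2x, hc, mul_comm (q-p) p]
        have hxp : x ^ (∑ i : Fin p, (i:ℕ)) ≠ 0 := by positivity
        field_simp
      · rw [if_neg hall, Gf]
        push Not at hall
        obtain ⟨i, hi⟩ := hall
        have : Wf x s (q-p) (b i) = 0 := by
          rw [Wf, if_neg, zero_mul]
          rw [← hcond]; omega
        rw [Finset.prod_eq_zero (f := fun i => Wf x s (q-p) (b i)) (Finset.mem_univ i) this]
        ring
    · intro μ hμ
      simp [Pword, hμ]
  · intro σ h
    rw [Gf_symm, pi_Po_real x hx, pi_Po_real x hx]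
    congr 1
    exact Equiv.prod_comp σ (fun i => exp (-x) * x^(h i) / ((h i).factorial:ℝ))
  · intro h hh
    rw [Gf_inj _ _ _ _ hh, mul_zero]

lemma numer_eq (p m : ℕ) (s : ℝ) :
    ∫ ξ in Set.univ.pi fun _ : Fin p => Set.Ici s, vdm ξ ^ 2 * ∏ i, ((ξ i - s) ^ m * Real.exp (-(ξ i ^ 2))) =
     √π ^ p * ∑ σ : Equiv.Perm (Fin p), ∑ τ : Equiv.Perm (Fin p), (((Equiv.Perm.sign σ : ℤ):ℝ) * ((Equiv.Perm.sign τ : ℤ):ℝ)) *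
        ∏ i, aLim s ((σ i : ℕ) + (τ i : ℕ) + m) := by
  have h := (andreief (volume.restrict (Set.Ici s)) (fun (j : Fin p) (y : ℝ) => (y - s)^(j:ℕ)) (fun y => (y-s)^m * exp (-(y^2))) (by
    intro i j
    have := integrable_poly_gauss ((Polynomial.X - Polynomial.C s)^(i+j+m : ℕ))
    refine (this.restrict).congr (Eventually.of_forall fun y => ?_)
    simp [pow_add]; ring)).2
  rw [volume_pi, Measure.restrict_pi_pi]
  have e : ∀ ξ : Fin p → ℝ, vdm ξ ^ 2 = (Matrix.of fun i j : Fin p => (ξ i - s)^(j:ℕ)).det^2 := by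
    intro ξ
    rw [vdm_sq, ← Matrix.det_vandermonde_sub ξ s]; rfl
  simp only [e]
  rw [h, Finset.mul_sum]
  refine Finset.sum_congr rfl fun σ _ => ?_
  rw [Finset.mul_sum]
  refine Finset.sum_congr rfl fun τ _ => ?_
  have e2 : ∀ i : Fin p, ∫ a in Set.Ici s, (a - s)^(σ i:ℕ) * (a - s)^(τ i:ℕ) * ((a-s)^m * exp (-(a^2))) = √π * aLim s ((σ i : ℕ) + (τ i : ℕ) + m) := by
    intro i
    rw [aLim, ← mul_assoc, mul_inv_cancel₀ (by positivity), one_mul]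
    congr 1; ext a; ring
  simp only [e2, Finset.prod_mul_distrib, Finset.prod_const, Finset.card_univ, Fintype.card_fin]
  ring

/-- with `x_n > 0` the positive solution of `n − p = x_n + s√(2x_n)`,
the rescaled Poissonized expectation `(2x_n)^{−p(q−p)/2} E_{x_n,p}(1_{λ⊇μ_n} H_n(λ))`
converges to a ratio of matrix-model integrals. -/
theorem statement4 (p q : ℕ) (hp : 1 ≤ p) (hpq : p ≤ q) (s : ℝ) (x : ℕ → ℝ)
    (hx : ∀ n : ℕ, p < n →
      0 < x n ∧ (n : ℝ) - p = x n + s * Real.sqrt (2 * x n)) :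
    Filter.Tendsto
      (fun n : ℕ => (2 * x n) ^ (-((p : ℝ) * ((q : ℝ) - p) / 2)) *
        Epois (x n) p (fun lam => indSup n p lam * (Hstrip n p q lam : ℝ)))
      Filter.atTop
      (nhds
        ((∫ ξ in Set.univ.pi fun _ : Fin p => Set.Ici s,
            vdm ξ ^ 2 * ∏ i, ((ξ i - s) ^ (q - p) * Real.exp (-(ξ i ^ 2)))) /
          ∫ ξ : Fin p → ℝ, vdm ξ ^ 2 * ∏ i, Real.exp (-(ξ i ^ 2)))) := by
  have hxlim : Tendsto x atTop atTop := by
    have h1 : Tendsto (fun n : ℕ => ((n:ℝ) - p - s^2)/2) atTop atTop := by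
      refine Tendsto.atTop_div_const (by norm_num) ?_
      have := tendsto_atTop_add_const_right atTop (-(p:ℝ) - s^2) (tendsto_natCast_atTop_atTop (R := ℝ))
      refine this.congr fun n => by ring
    refine tendsto_atTop_mono' _ ?_ h1
    filter_upwards [eventually_gt_atTop p] with n hn
    obtain ⟨h0, h⟩ := hx n hn
    rw [h]
    have hsq : √(2*x n)^2 = 2*x n := Real.sq_sqrt (by positivity)
    nlinarith [sq_nonneg (s - √(2*x n)), sq_nonneg s]
  rw [numer_eq, denom_eq]
  have hlim : Tendsto (fun n => (2 ^ (∑ i : Fin p, (i:ℕ)) * (∏ i : Fin p, ((i:ℕ).factorial:ℝ))⁻¹) *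
       ((p.factorial:ℝ)⁻¹ * ∑ σ : Equiv.Perm (Fin p), ∑ τ : Equiv.Perm (Fin p), (((Equiv.Perm.sign σ : ℤ):ℝ) * ((Equiv.Perm.sign τ : ℤ):ℝ)) *
        ∏ i, Af (x n) s (q-p) ((σ i : ℕ) + (τ i : ℕ)))) atTop (𝓝 ((2 ^ (∑ i : Fin p, (i:ℕ)) * (∏ i : Fin p, ((i:ℕ).factorial:ℝ))⁻¹) *
       ((p.factorial:ℝ)⁻¹ * ∑ σ : Equiv.Perm (Fin p), ∑ τ : Equiv.Perm (Fin p), (((Equiv.Perm.sign σ : ℤ):ℝ) * ((Equiv.Perm.sign τ : ℤ):ℝ)) *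
        ∏ i, aLim s ((σ i : ℕ) + (τ i : ℕ) + (q-p))))) := by
    refine Tendsto.const_mul _ (Tendsto.const_mul _ ?_)
    refine tendsto_finsetSum _ fun σ _ => tendsto_finsetSum _ fun τ _ => Tendsto.const_mul _ ?_
    refine tendsto_finsetProd _ fun i _ => ?_
    exact A_lim x hxlim s (q-p) _
  convert! hlim.congr' ?_ using 2
  · rw [Finset.prod_div_distrib, Finset.prod_mul_distrib, Finset.prod_const, Finset.card_univ, Fintype.card_fin, Finset.prod_pow_eq_pow_sum]
    have : √π ≠ 0 := by positivity
    have h2 : (∏ i : Fin p, ((i:ℕ).factorial:ℝ)) ≠ 0 := Finset.prod_ne_zero_iff.2 fun i _ => by positivity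
    field_simp
  · filter_upwards [eventually_gt_atTop p, eventually_ge_atTop q] with n hn hqn
    obtain ⟨h0, h⟩ := hx n hn
    rw [Epois_eq p q n hp hpq hqn s (x n) h0 h]
    have hpow : (2 * x n) ^ (-((p : ℝ) * ((q : ℝ) - p) / 2)) * √(2*x n) ^ (p * (q-p)) = 1 := by
      rw [Real.sqrt_eq_rpow, ← Real.rpow_natCast, ← Real.rpow_mul (by positivity), ← Real.rpow_add (by positivity)]
      push_cast [Nat.cast_sub hpq]
      rw [show -((p : ℝ) * ((q : ℝ) - p) / 2) + 1/2 * ((p:ℝ) * ((q:ℝ) - p)) = 0 by ring, Real.rpow_zero]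
    linear_combination (-1:ℝ) * (2 ^ (∑ i : Fin p, (i:ℕ)) * (∏ i : Fin p, ((i:ℕ).factorial:ℝ))⁻¹) *
       ((p.factorial:ℝ)⁻¹ * ∑ σ : Equiv.Perm (Fin p), ∑ τ : Equiv.Perm (Fin p), (((Equiv.Perm.sign σ : ℤ):ℝ) * ((Equiv.Perm.sign τ : ℤ):ℝ)) *
        ∏ i, Af (x n) s (q-p) ((σ i : ℕ) + (τ i : ℕ))) * hpow

end
end

section
/- Let p, q ≥ 1 be integers and u a real (or complex) number with |u| < 1. Then Σ_{κ} u^{|κ|} (p)_κ (q)_κ / (h^κ)² = (1 − u)^{−pq}, where the sum is over all partitions κ (only partitions with at most min(p,q) parts contribute, since (p)_κ = 0 otherwise), and the series converges absolutely. -/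
open MeasureTheory Filter Real
open scoped BigOperators Topology

noncomputable section

open Finset Matrix in
lemma hasSum_pi_prod (n : ℕ) (f : Fin n → ℕ → ℝ) (s : Fin n → ℝ)
    (h : ∀ i, HasSum (f i) (s i)) :
    HasSum (fun l : Fin n → ℕ => ∏ i, f i (l i)) (∏ i, s i) := by
  induction n with
  | zero => simpa using hasSum_unique (fun l : Fin 0 → ℕ => (1 : ℝ))
  | succ n ih =>
    have h1 := ih (fun i => f i.succ) (fun i => s i.succ) (fun i => h _)
    have hs : Summable (fun x : ℕ × (Fin n → ℕ) => f 0 x.1 * ∏ i, f (Fin.succ i) (x.2 i)) :=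
      summable_mul_of_summable_norm (f := f 0)
        (g := fun l : Fin n → ℕ => ∏ i, f (Fin.succ i) (l i)) (h 0).summable.norm h1.summable.norm
    have h2 := HasSum.mul (h 0) h1 hs
    rw [Fin.prod_univ_succ]
    rw [← (Fin.consEquiv (fun _ : Fin (n+1) => ℕ)).hasSum_iff]
    convert! h2 using 1
    funext x
    simp [Fin.prod_univ_succ, Fin.consEquiv]

def ww (a : ℕ) (u : ℝ) (k l : ℕ) : ℝ := ((l + a + k).factorial : ℝ) / (l.factorial : ℝ) * u ^ l

lemma moment (a i j : ℕ) (u : ℝ) (hu : |u| < 1) :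
    HasSum (fun l : ℕ => (l.descFactorial i : ℝ) * ww a u j l)
      (u ^ i * (a + i + j).factorial / (1 - u) ^ (a + i + j + 1)) := by
  have h := hasSum_choose_mul_geometric_of_norm_lt_one (a + i + j) (r := u) (by simpa using hu)
  have h2 := h.mul_left (u ^ i * ((a + i + j).factorial : ℝ))
  rw [mul_one_div] at h2
  have hinj : Function.Injective (fun m : ℕ => m + i) := fun x y h => by simpa using h
  rw [← hinj.hasSum_iff]
  · convert! h2 using 1
    funext m
    simp only [Function.comp, ww]
    have e1 : ((m + i).descFactorial i : ℝ) * (m.factorial : ℝ) = ((m + i).factorial : ℝ) := by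
      have := Nat.factorial_mul_descFactorial (n := m + i) (k := i) (by omega)
      rw [Nat.add_sub_cancel] at this
      rw [mul_comm]; exact_mod_cast this
    have e2 : ((m + (a + i + j)).choose (a + i + j) : ℝ) * (a + i + j).factorial * m.factorial
        = (m + (a + i + j)).factorial := by
      have := Nat.add_choose_mul_factorial_mul_factorial m (a + i + j)
      rw [mul_right_comm]; exact_mod_cast this
    have e3 : m + i + a + j = m + (a + i + j) := by ring
    rw [e3, ← e2]
    have p1 : (m.factorial : ℝ) ≠ 0 := by positivity
    have p2 : ((m+i).factorial : ℝ) ≠ 0 := by positivity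
    rw [← e1] at p2 ⊢
    have p3 := left_ne_zero_of_mul p2
    field_simp
    ring
  · intro x hx
    have : x < i := by
      by_contra hc
      exact hx ⟨x - i, by simp; omega⟩
    simp [Nat.descFactorial_of_lt this]

def VV {p : ℕ} (l : Fin p → ℕ) : ℝ := (Matrix.vandermonde (fun i => (l i : ℝ))).det

lemma VV_desc {p : ℕ} (l : Fin p → ℕ) :
    VV l = (Matrix.of fun i j : Fin p => ((l i).descFactorial j : ℝ)).det := by
  unfold VV
  rw [Matrix.det_eval_matrixOfPolynomials_eq_det_vandermonde _ (fun j => descPochhammer ℝ j)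
    (fun i => descPochhammer_natDegree ℝ i) (fun i => monic_descPochhammer ℝ i)]
  simp only [descPochhammer_eval_eq_descFactorial]

lemma VV_asc {p : ℕ} (a : ℕ) (l : Fin p → ℕ) :
    VV l = (Matrix.of fun i j : Fin p => ((l i + a + 1).ascFactorial j : ℝ)).det := by
  unfold VV
  rw [← Matrix.det_vandermonde_add _ ((a + 1 : ℕ) : ℝ),
    Matrix.det_eval_matrixOfPolynomials_eq_det_vandermonde _ (fun j => ascPochhammer ℝ j)
    (fun i => ascPochhammer_natDegree (S := ℝ) i) (fun i => monic_ascPochhammer ℝ i)]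
  simp only [← ascPochhammer_nat_eq_natCast_ascFactorial]
  push_cast
  simp only [add_assoc]

lemma VV_range (p : ℕ) : VV (fun i : Fin p => (i : ℕ)) = ∏ i : Fin p, ((i : ℕ).factorial : ℝ) := by
  rw [VV_desc, Matrix.det_of_isLowerTriangular]
  · simp [Nat.descFactorial_self]
  · intro i j hij
    simp only [OrderDual.toDual_lt_toDual] at hij
    simp only [Matrix.of_apply]
    exact_mod_cast Nat.descFactorial_of_lt hij

lemma fact_asc (n k : ℕ) : ((n + k).factorial : ℝ) = n.factorial * (n + 1).ascFactorial k := by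
  exact_mod_cast (Nat.factorial_mul_ascFactorial n k).symm

lemma detM (p a : ℕ) (u : ℝ) (hu : |u| < 1) :
    (Matrix.of fun i j : Fin p => u ^ (i : ℕ) * (a + i + j : ℕ).factorial / (1 - u) ^ (a + i + j + 1 : ℕ)).det
      = (∏ i : Fin p, u ^ (i : ℕ)) * (∏ i : Fin p, ((i : ℕ).factorial : ℝ) * (i + a : ℕ).factorial)
        * ((1 - u) ^ (p * (p + a)))⁻¹ := by
  have h1 : (1 - u) ≠ 0 := by
    have := (abs_lt.1 hu).2
    linarith
  have e : (Matrix.of fun i j : Fin p => u ^ (i : ℕ) * (a + i + j : ℕ).factorial / (1 - u) ^ (a + i + j + 1 : ℕ))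
    = Matrix.of fun i j : Fin p => (u ^ (i : ℕ) * (i + a : ℕ).factorial * ((1 - u) ^ (a + i + 1 : ℕ))⁻¹) *
      (Matrix.of fun i j : Fin p => ((1 - u) ^ (j : ℕ))⁻¹ *
        (Matrix.of fun i j : Fin p => ((i + a + 1 : ℕ).ascFactorial j : ℝ)) i j) i j := by
    ext i j
    simp only [Matrix.of_apply]
    rw [fact_asc, add_comm a (i : ℕ)]
    field_simp
    ring
  rw [e, Matrix.det_mul_column, Matrix.det_mul_row, ← VV_asc a (fun i : Fin p => (i : ℕ)), VV_range]
  have e2 : ((1 - u) ^ (p * (p + a)))⁻¹ = (∏ i : Fin p, ((1 - u) ^ (a + i + 1 : ℕ))⁻¹) * ∏ i : Fin p, ((1 - u) ^ (i : ℕ))⁻¹ := by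
    rw [← Finset.prod_mul_distrib]
    simp only [← mul_inv, ← pow_add]
    rw [Finset.prod_inv_distrib, Finset.prod_pow_eq_pow_sum]
    congr 2
    rw [Fin.sum_univ_eq_sum_range (fun i => a + i + 1 + i)]
    clear e
    induction p with
    | zero => simp
    | succ n ih => rw [Finset.sum_range_succ, ← ih]; ring
  rw [e2]
  simp only [Finset.prod_mul_distrib]
  ring

lemma sum_all (p a : ℕ) (u : ℝ) (hu : |u| < 1) :
    HasSum (fun l : Fin p → ℕ => VV l * ∏ k : Fin p, ww a u k (l k))
      ((Matrix.of fun i j : Fin p => u ^ (i : ℕ) * (a + i + j : ℕ).factorial / (1 - u) ^ (a + i + j + 1 : ℕ)).det) := by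
  rw [Matrix.det_apply']
  have : ∀ σ : Equiv.Perm (Fin p), HasSum (fun l : Fin p → ℕ =>
      ((Equiv.Perm.sign σ : ℤ) : ℝ) * ∏ k : Fin p, (((l k).descFactorial (σ k) : ℝ) * ww a u k (l k)))
      (((Equiv.Perm.sign σ : ℤ) : ℝ) * ∏ k : Fin p,
        (u ^ (σ k : ℕ) * (a + σ k + k : ℕ).factorial / (1 - u) ^ (a + σ k + k + 1 : ℕ))) := fun σ =>
    (hasSum_pi_prod p _ _ (fun k => moment a (σ k) k u hu)).mul_left _
  convert hasSum_sum (fun σ (_ : σ ∈ Finset.univ) => this σ) using 1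
  · ext l
    rw [VV_desc, ← Matrix.det_transpose, Matrix.det_apply', Finset.sum_mul]
    simp only [Finset.prod_mul_distrib, mul_assoc, Matrix.transpose_apply, Matrix.of_apply]
  · rfl

lemma sum_perm (p a : ℕ) (u : ℝ) (l : Fin p → ℕ) :
    ∑ σ : Equiv.Perm (Fin p), VV (l ∘ σ) * ∏ k : Fin p, ww a u k (l (σ k))
      = VV l ^ 2 * ∏ k : Fin p, ww a u 0 (l k) := by
  have h1 : ∀ σ : Equiv.Perm (Fin p), VV (l ∘ σ) * ∏ k : Fin p, ww a u k (l (σ k)) =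
      (VV l * ∏ k : Fin p, ww a u 0 (l k)) *
      (((Equiv.Perm.sign σ : ℤ) : ℝ) * ∏ k : Fin p, ((l (σ k) + a + 1).ascFactorial k : ℝ)) := by
    intro σ
    have e1 : VV (l ∘ σ) = ((Equiv.Perm.sign σ : ℤ) : ℝ) * VV l := by
      unfold VV
      rw [← Matrix.det_permute]
      rfl
    have e2 : ∏ k : Fin p, ww a u k (l (σ k)) =
      (∏ k : Fin p, ww a u 0 (l k)) * ∏ k : Fin p, ((l (σ k) + a + 1).ascFactorial k : ℝ) := by
      rw [← Equiv.prod_comp σ (fun k => ww a u 0 (l k)), ← Finset.prod_mul_distrib]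
      refine Finset.prod_congr rfl fun k _ => ?_
      simp only [ww]
      rw [fact_asc (l (σ k) + a) k]
      simp only [add_zero]
      ring
    rw [e1, e2]; ring
  simp only [h1]
  rw [← Finset.mul_sum]
  have : VV l = ∑ σ : Equiv.Perm (Fin p),
    (((Equiv.Perm.sign σ : ℤ) : ℝ) * ∏ k : Fin p, ((l (σ k) + a + 1).ascFactorial k : ℝ)) := by
    rw [VV_asc a, Matrix.det_apply']
    rfl
  rw [← this]; ring

/-- shifted parts -/
def lam (p : ℕ) (κ : YoungDiagram) (i : Fin p) : ℕ := κ.rowLen i + (p - 1 - i)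

lemma lam_strictAnti (p : ℕ) (κ : YoungDiagram) : StrictAnti (lam p κ) := by
  intro i j hij
  have h1 := κ.rowLen_anti i j (le_of_lt hij)
  have h2 : (i : ℕ) < j := hij
  have := j.2
  simp only [lam]
  omega

lemma rowLen_ext {κ μ : YoungDiagram} (h : ∀ i, κ.rowLen i = μ.rowLen i) : κ = μ := by
  ext ⟨i, j⟩
  rw [YoungDiagram.mem_cells, YoungDiagram.mem_cells, YoungDiagram.mem_iff_lt_rowLen,
    YoungDiagram.mem_iff_lt_rowLen, h]

lemma rowLen_eq_zero {κ : YoungDiagram} {p i : ℕ} (h : κ.colLen 0 ≤ p) (hi : p ≤ i) :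
    κ.rowLen i = 0 := by
  by_contra hc
  have : (i, 0) ∈ κ := YoungDiagram.mem_iff_lt_rowLen.2 (by omega)
  rw [YoungDiagram.mem_iff_lt_colLen] at this
  omega

lemma lam_inj {p : ℕ} {κ μ : YoungDiagram} (hκ : κ.colLen 0 ≤ p) (hμ : μ.colLen 0 ≤ p)
    (h : lam p κ = lam p μ) : κ = μ := by
  apply rowLen_ext
  intro i
  by_cases hi : i < p
  · have := congrFun h ⟨i, hi⟩
    simp only [lam] at this
    omega
  · rw [rowLen_eq_zero hκ (by omega), rowLen_eq_zero hμ (by omega)]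

lemma exists_diagram (p : ℕ) (r : ℕ → ℕ) (hr : Antitone r) (h0 : ∀ i, p ≤ i → r i = 0) :
    ∃ κ : YoungDiagram, κ.colLen 0 ≤ p ∧ ∀ i, κ.rowLen i = r i := by
  let κ : YoungDiagram :=
    { cells := (Finset.range p ×ˢ Finset.range (r 0)).filter (fun c => c.2 < r c.1)
      isLowerSet := by
        rintro ⟨i, j⟩ ⟨i', j'⟩ ⟨h1, h2⟩ h
        simp only [Finset.coe_filter, Finset.mem_product, Finset.mem_range, Set.mem_ofPred_eq] at *
        have := hr h1
        omega }
  have hm : ∀ i j, (i, j) ∈ κ ↔ j < r i := by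
    intro i j
    rw [← YoungDiagram.mem_cells]
    simp only [κ, Finset.mem_filter, Finset.mem_product, Finset.mem_range]
    constructor
    · exact fun h => h.2
    · intro h
      have h2 := hr (Nat.zero_le i)
      have : i < p := by
        by_contra hc
        have := h0 i (by omega)
        omega
      omega
  refine ⟨κ, ?_, ?_⟩
  · by_contra hc
    have : (p, 0) ∈ κ := YoungDiagram.mem_iff_lt_colLen.2 (by omega)
    rw [hm, h0 p le_rfl] at this
    omega
  · intro i
    have h1 := hm i (r i)
    have h2 := hm i (κ.rowLen i)
    rw [YoungDiagram.mem_iff_lt_rowLen] at h1 h2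
    omega

lemma lam_surj {p : ℕ} (l : Fin p → ℕ) (hl : StrictAnti l) :
    ∃ κ : YoungDiagram, κ.colLen 0 ≤ p ∧ lam p κ = l := by
  have key : ∀ d : ℕ, ∀ i j : Fin p, (j : ℕ) = i + d → l j + d ≤ l i := by
    intro d
    induction d with
    | zero => 
      intro i j h
      have : i = j := Fin.ext (by omega)
      simp [this]
    | succ d ih =>
      intro i j h
      have h1 := ih i ⟨i + d, by omega⟩ rfl
      have h2 : l j < l ⟨i + d, by omega⟩ := hl (by rw [Fin.lt_def]; simp; omega)
      omega
  obtain ⟨κ, h1, h2⟩ := exists_diagram p (fun i => if h : i < p then l ⟨i, h⟩ - (p - 1 - i) else 0)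
    (by
      intro i j hij
      by_cases hj : j < p
      · have hi : i < p := by omega
        simp only [hj, hi, dite_true]
        have := key (j - i) ⟨i, hi⟩ ⟨j, hj⟩ (by simp; omega)
        omega
      · simp [hj])
    (fun i hi => by simp [Nat.not_lt.2 hi])
  refine ⟨κ, h1, funext fun i => ?_⟩
  simp only [lam, h2, i.2, dite_true]
  have h3 := key (p - 1 - i) i ⟨p - 1, by have := i.2; omega⟩ (by have := i.2; simp; omega)
  simp only [Fin.eta]
  omega

/-- diagrams times permutations -/
def emb (p : ℕ) (x : {κ : YoungDiagram // κ.colLen 0 ≤ p} × Equiv.Perm (Fin p)) : Fin p → ℕ :=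
  lam p x.1.1 ∘ x.2

lemma emb_inj (p : ℕ) : Function.Injective (emb p) := by
  rintro ⟨⟨κ, hκ⟩, σ⟩ ⟨⟨μ, hμ⟩, τ⟩ h
  simp only [emb] at h
  have hr : Set.range (lam p κ) = Set.range (lam p μ) := by
    rw [← σ.surjective.range_comp (lam p κ), ← τ.surjective.range_comp (lam p μ), h]
  have h1 := ((lam_strictAnti p κ).range_inj (lam_strictAnti p μ)).1 hr
  have h2 := lam_inj hκ hμ h1
  subst h2
  have : σ = τ := Equiv.ext fun i => (lam_strictAnti p κ).injective (congrFun h i)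
  rw [this]

lemma emb_range (p : ℕ) (l : Fin p → ℕ) (hl : Function.Injective l) : l ∈ Set.range (emb p) := by
  have h1 := Tuple.monotone_sort l
  have h2 : StrictMono (l ∘ Tuple.sort l) :=
    h1.strictMono_of_injective (hl.comp (Tuple.sort l).injective)
  have h3 : StrictAnti ((l ∘ Tuple.sort l) ∘ Fin.rev) := h2.comp_strictAnti Fin.rev_strictAnti
  obtain ⟨κ, hκ, h⟩ := lam_surj _ h3
  refine ⟨⟨⟨κ, hκ⟩, (Fin.revPerm.trans (Tuple.sort l)).symm⟩, ?_⟩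
  simp only [emb, h]
  ext i
  simp

@[to_additive]
lemma cells_prod {M : Type*} [CommMonoid M] {p : ℕ} {κ : YoungDiagram} (h : κ.colLen 0 ≤ p)
    (f : ℕ × ℕ → M) :
    ∏ c ∈ κ.cells, f c = ∏ i : Fin p, ∏ j ∈ Finset.range (κ.rowLen i), f (i, j) := by
  rw [Fin.prod_univ_eq_prod_range (fun i => ∏ j ∈ Finset.range (κ.rowLen i), f (i, j)),
    ← Finset.prod_fiberwise_of_maps_to (s := κ.cells) (t := Finset.range p) (g := fun c => c.1)]
  · refine Finset.prod_congr rfl fun i _ => ?_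
    have : κ.cells.filter (fun c => c.1 = i) = {i} ×ˢ Finset.range (κ.rowLen i) := by
      rw [← YoungDiagram.row_eq_prod]; rfl
    rw [this, Finset.prod_product, Finset.prod_singleton]
  · rintro ⟨i, j⟩ hc
    rw [YoungDiagram.mem_cells, YoungDiagram.mem_iff_lt_rowLen] at hc
    simp only [Finset.mem_range]
    by_contra hi
    rw [rowLen_eq_zero h (by omega)] at hc
    omega

lemma card_eq {p : ℕ} {κ : YoungDiagram} (h : κ.colLen 0 ≤ p) :
    κ.card = ∑ i : Fin p, κ.rowLen i := by
  have := cells_sum h (fun _ => 1)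
  simpa using this

lemma hook_row_s17 {p : ℕ} {κ : YoungDiagram} (h : κ.colLen 0 ≤ p) (i : Fin p) :
    (∏ j ∈ Finset.range (κ.rowLen i), hookLen κ (i, j)) *
      ∏ k ∈ Finset.Ioi i, (lam p κ i - lam p κ k) = (lam p κ i).factorial := by
  have hcell : ∀ a b, b < κ.rowLen a ↔ a < κ.colLen b := fun a b => by
    rw [← YoungDiagram.mem_iff_lt_rowLen, YoungDiagram.mem_iff_lt_colLen]
  have hanti := lam_strictAnti p κ
  have hcol : ∀ b, κ.colLen b ≤ p := fun b => (κ.colLen_anti 0 b (Nat.zero_le _)).trans h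
  have inj1 : Set.InjOn (fun j => hookLen κ (i, j)) (Finset.range (κ.rowLen i)) := by
    have : ∀ a b, a < b → b < κ.rowLen i → hookLen κ (i, b) < hookLen κ (i, a) := by
      intro a b hab hb
      have h1 := κ.colLen_anti a b hab.le
      have h2 := (hcell i b).1 hb
      simp only [hookLen]
      omega
    intro a ha b hb hab
    simp only [Finset.coe_range, Set.mem_Iio] at ha hb
    simp only at hab
    rcases lt_trichotomy a b with hlt | heq | hgt
    · have := this a b hlt hb; omega
    · exact heq
    · have := this b a hgt ha; omega
  have inj2 : Set.InjOn (fun k => lam p κ i - lam p κ k) (Finset.Ioi i : Finset (Fin p)) := by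
    intro a ha b hb hab
    simp only [Finset.coe_Ioi, Set.mem_Ioi] at ha hb
    have h1 := hanti ha
    have h2 := hanti hb
    simp only at hab
    exact hanti.injective (by omega)
  have hdisj : Disjoint ((Finset.range (κ.rowLen i)).image (fun j => hookLen κ (i, j)))
      ((Finset.Ioi i).image (fun k => lam p κ i - lam p κ k)) := by
    rw [Finset.disjoint_left]
    intro x hx hy
    simp only [Finset.mem_image, Finset.mem_range, Finset.mem_Ioi] at hx hy
    obtain ⟨j, hj, rfl⟩ := hx
    obtain ⟨k, hk, hk2⟩ := hy
    have h1 := hanti hk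
    have h2 := (hcell i j).1 hj
    have h3 := hcell k j
    have h5 : (i : ℕ) < k := hk
    have h6 := k.2
    simp only [hookLen, lam] at *
    by_cases hc : j < κ.rowLen k
    · have := h3.1 hc
      omega
    · have : ¬ (k : ℕ) < κ.colLen j := fun h => hc (h3.2 h)
      omega
  have hunion : ((Finset.range (κ.rowLen i)).image (fun j => hookLen κ (i, j))) ∪
      ((Finset.Ioi i).image (fun k => lam p κ i - lam p κ k)) = Finset.Ico 1 (lam p κ i + 1) := by
    apply Finset.eq_of_subset_of_card_le
    · intro x hx
      simp only [Finset.mem_union, Finset.mem_image, Finset.mem_range, Finset.mem_Ioi] at hx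
      rw [Finset.mem_Ico]
      rcases hx with ⟨j, hj, rfl⟩ | ⟨k, hk, rfl⟩
      · have h2 := (hcell i j).1 hj
        have := hcol j
        simp only [hookLen, lam]
        omega
      · have h1 := hanti hk
        omega
    · rw [Finset.card_union_of_disjoint hdisj, Finset.card_image_of_injOn inj1,
        Finset.card_image_of_injOn inj2]
      simp [lam]
  rw [← Finset.prod_Ico_id_eq_factorial, ← hunion, Finset.prod_union hdisj,
    Finset.prod_image inj1, Finset.prod_image inj2]

lemma hook_formula {p : ℕ} {κ : YoungDiagram} (h : κ.colLen 0 ≤ p) :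
    (hookProd κ : ℝ) ^ 2 * VV (lam p κ) ^ 2 = (∏ i : Fin p, ((lam p κ i).factorial : ℝ)) ^ 2 := by
  have h1 : (hookProd κ : ℝ) * ∏ i : Fin p, ∏ k ∈ Finset.Ioi i, ((lam p κ i : ℝ) - lam p κ k)
      = ∏ i : Fin p, ((lam p κ i).factorial : ℝ) := by
    unfold hookProd
    rw [cells_prod h]
    push_cast
    rw [← Finset.prod_mul_distrib]
    refine Finset.prod_congr rfl fun i _ => ?_
    rw [← hook_row_s17 h i]
    push_cast
    congr 1
    refine Finset.prod_congr rfl fun k hk => ?_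
    rw [Nat.cast_sub]
    exact (lam_strictAnti p κ (Finset.mem_Ioi.1 hk)).le
  rw [← h1, mul_pow]
  congr 1
  unfold VV
  rw [Matrix.det_vandermonde, ← Finset.prod_pow, ← Finset.prod_pow]
  refine Finset.prod_congr rfl fun i _ => ?_
  rw [← Finset.prod_pow, ← Finset.prod_pow]
  refine Finset.prod_congr rfl fun k _ => ?_
  ring

lemma pochRe_fact (n m : ℕ) : pochRe ((n : ℝ) + 1) m * n.factorial = (n + m).factorial := by
  induction m with
  | zero => simp [pochRe]
  | succ m ih =>
    rw [pochRe, Finset.prod_range_succ, ← pochRe, ← add_assoc, Nat.factorial_succ]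
    push_cast
    rw [← ih]; ring

lemma pochPart_eq {p : ℕ} {κ : YoungDiagram} (h : κ.colLen 0 ≤ p) (a : ℕ) :
    pochPart ((p + a : ℕ) : ℝ) κ * ∏ i : Fin p, ((i + a : ℕ).factorial : ℝ)
      = ∏ i : Fin p, ((lam p κ i + a).factorial : ℝ) := by
  have e : pochPart ((p + a : ℕ) : ℝ) κ = ∏ i : Fin p, pochRe (((p + a : ℕ) : ℝ) - (i : ℕ)) (κ.rowLen i) := by
    rw [Fin.prod_univ_eq_prod_range (fun i => pochRe (((p + a : ℕ) : ℝ) - i) (κ.rowLen i))]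
    unfold pochPart
    refine Finset.prod_subset (by simpa using h) fun i _ hi => ?_
    rw [rowLen_eq_zero le_rfl (by simpa using hi)]
    simp [pochRe]
  rw [e, ← Equiv.prod_comp Fin.revPerm (fun i : Fin p => ((i + a : ℕ).factorial : ℝ)),
    ← Finset.prod_mul_distrib]
  refine Finset.prod_congr rfl fun i _ => ?_
  have hi := i.2
  have e2 : ((Fin.revPerm i : Fin p) : ℕ) = p - 1 - i := by simp [Fin.val_rev]; omega
  have e3 : ((p + a : ℕ) : ℝ) - (i : ℕ) = ((p - 1 - i + a : ℕ) : ℝ) + 1 := by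
    have : p + a = (p - 1 - i + a) + 1 + i := by omega
    rw [this]; push_cast
    ring
  rw [e2, e3, pochRe_fact]
  congr 2
  simp only [lam]
  omega

lemma pochPart_zero {p : ℕ} {κ : YoungDiagram} (h : ¬ κ.colLen 0 ≤ p) : pochPart (p : ℝ) κ = 0 := by
  unfold pochPart
  apply Finset.prod_eq_zero (i := p) (by simpa using h)
  have : (p, 0) ∈ κ := YoungDiagram.mem_iff_lt_colLen.2 (by omega)
  rw [YoungDiagram.mem_iff_lt_rowLen] at this
  unfold pochRe
  apply Finset.prod_eq_zero (i := 0) (by simpa using this)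
  simp

lemma term_eq {p : ℕ} {κ : YoungDiagram} (h : κ.colLen 0 ≤ p) (a : ℕ) (u : ℝ) :
    VV (lam p κ) ^ 2 * ∏ k : Fin p, ww a u 0 (lam p κ k) =
    ((∏ i : Fin p, u ^ (i : ℕ)) * (∏ i : Fin p, ((i : ℕ).factorial : ℝ) * (i + a : ℕ).factorial)) *
    (u ^ κ.card * pochPart (p : ℝ) κ * pochPart ((p + a : ℕ) : ℝ) κ / (hookProd κ : ℝ) ^ 2) := by
  have h1 := hook_formula h
  have h2 := pochPart_eq h a
  have h3 := pochPart_eq h 0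
  simp only [add_zero] at h3
  have h4 : (∏ i : Fin p, u ^ (lam p κ i)) = (∏ i : Fin p, u ^ (i : ℕ)) * u ^ κ.card := by
    rw [card_eq h, ← Finset.prod_pow_eq_pow_sum,
      ← Equiv.prod_comp Fin.revPerm (fun i : Fin p => u ^ (i : ℕ)), ← Finset.prod_mul_distrib]
    refine Finset.prod_congr rfl fun i _ => ?_
    have e2 : ((Fin.revPerm i : Fin p) : ℕ) = p - 1 - i := by simp [Fin.val_rev]; omega
    rw [e2, lam, pow_add, mul_comm]
  have hL : (∏ i : Fin p, ((lam p κ i).factorial : ℝ)) ≠ 0 :=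
    Finset.prod_ne_zero_iff.2 fun i _ => by positivity
  have hH : (hookProd κ : ℝ) ^ 2 ≠ 0 := by
    intro h0
    rw [h0, zero_mul] at h1
    exact pow_ne_zero 2 hL h1.symm
  simp only [ww, add_zero, Finset.prod_mul_distrib, Finset.prod_div_distrib]
  rw [h4, ← h2, ← mul_div_assoc, eq_div_iff hH]
  field_simp
  rw [← h3] at h1 ⊢
  linear_combination (u ^ κ.card * pochPart (p + a : ℕ) κ) * (∏ i : Fin p, u ^ (i : ℕ)) * h1

lemma main_le (p a : ℕ) (u : ℝ) (hu : |u| < 1) :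
    HasSum (fun κ : YoungDiagram =>
      u ^ κ.card * pochPart (p : ℝ) κ * pochPart ((p + a : ℕ) : ℝ) κ / (hookProd κ : ℝ) ^ 2)
      ((1 - u) ^ (p * (p + a)))⁻¹ := by
  by_cases hu0 : u = 0
  · subst hu0
    have h := hasSum_single (f := fun κ : YoungDiagram =>
      (0:ℝ) ^ κ.card * pochPart (p : ℝ) κ * pochPart ((p + a : ℕ) : ℝ) κ / (hookProd κ : ℝ) ^ 2) ⊥
      (by
        intro κ hκ
        have : κ.card ≠ 0 := by
          intro h0
          apply hκ
          ext c
          rw [Finset.card_eq_zero.1 h0]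
          simp
        simp [this])
    convert h using 1
    have hc : (⊥ : YoungDiagram).colLen 0 = 0 := by
      rw [YoungDiagram.colLen_eq_card]
      simp [YoungDiagram.col]
    have hd : (⊥ : YoungDiagram).card = 0 := by simp [YoungDiagram.card]
    simp [pochPart, hookProd, hc, hd]
  · have hs := sum_all p a u hu
    rw [detM p a u hu, ← (emb_inj p).hasSum_iff] at hs
    · have hs2 := hs.prod_fiberwise (fun κ => hasSum_fintype _)
      simp only [Function.comp_def, emb] at hs2
      have hC : ((∏ i : Fin p, u ^ (i : ℕ)) * (∏ i : Fin p, ((i : ℕ).factorial : ℝ) * (i + a : ℕ).factorial)) ≠ 0 := by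
        apply mul_ne_zero <;> refine Finset.prod_ne_zero_iff.2 fun i _ => ?_
        · exact pow_ne_zero _ hu0
        · positivity
      have e : ∀ κ : {κ : YoungDiagram // κ.colLen 0 ≤ p},
        (∑ σ : Equiv.Perm (Fin p), VV (fun x => lam p κ.1 (σ x)) * ∏ k : Fin p, ww a u k (lam p κ.1 (σ k)))
        = _ := fun κ => (sum_perm p a u (lam p κ.1)).trans (term_eq κ.2 a u)
      simp only [e] at hs2
      rw [hasSum_mul_left_iff hC] at hs2
      rw [← Function.Injective.hasSum_iff Subtype.val_injective (f := fun κ : YoungDiagram =>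
        u ^ κ.card * pochPart (p : ℝ) κ * pochPart ((p + a : ℕ) : ℝ) κ / (hookProd κ : ℝ) ^ 2)
        (g := (Subtype.val : {κ : YoungDiagram // κ.colLen 0 ≤ p} → YoungDiagram))]
      · exact hs2
      · intro κ hκ
        have : ¬ κ.colLen 0 ≤ p := fun h => hκ ⟨⟨κ, h⟩, rfl⟩
        simp [pochPart_zero this]
    · intro l hl
      have : VV l = 0 := by
        by_contra hne
        apply hl
        apply emb_range
        have := Matrix.det_vandermonde_ne_zero_iff.1 hne
        intro i j hij
        exact this (by simp [hij])
      rw [this, zero_mul]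

/-- the Cauchy-type identity
`Σ_κ u^{|κ|} (p)_κ (q)_κ / (h^κ)² = (1 − u)^{−pq}` for `|u| < 1`, the series
converging absolutely. -/
theorem statement17 (p q : ℕ) (hp : 1 ≤ p) (hq : 1 ≤ q) (u : ℝ) (hu : |u| < 1) :
    Summable (fun κ : YoungDiagram =>
      u ^ κ.card * pochPart (p : ℝ) κ * pochPart (q : ℝ) κ / (hookProd κ : ℝ) ^ 2) ∧
    (∑' κ : YoungDiagram,
      u ^ κ.card * pochPart (p : ℝ) κ * pochPart (q : ℝ) κ / (hookProd κ : ℝ) ^ 2) =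
      ((1 - u) ^ (p * q))⁻¹ := by
  suffices h : HasSum (fun κ : YoungDiagram =>
      u ^ κ.card * pochPart (p : ℝ) κ * pochPart (q : ℝ) κ / (hookProd κ : ℝ) ^ 2)
      ((1 - u) ^ (p * q))⁻¹ from ⟨h.summable, h.tsum_eq⟩
  rcases le_total p q with h | h
  · obtain ⟨a, rfl⟩ := Nat.exists_eq_add_of_le h
    exact main_le p a u hu
  · obtain ⟨a, rfl⟩ := Nat.exists_eq_add_of_le h
    have := main_le q a u hu
    rw [mul_comm (q + a) q]
    convert this using 2 with κ
    ring

end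
end

section
/- Let λ be a partition with at most q parts, where q ≥ 1 is an integer. Then the number of semistandard Young tableaux of shape λ with entries in {1,…,q} equals ∏_{(i,j)∈λ} (q + j − i) / h^λ_{ij}, which equals (q)_λ / h^λ. -/
open MeasureTheory Filter Real
open scoped BigOperators Topology

noncomputable section

open Polynomial in
lemma dp_diff (j : ℕ) (x : ℝ) : (descPochhammer ℝ (j+1)).eval (x+1) - (descPochhammer ℝ (j+1)).eval x
    = (j+1) * (descPochhammer ℝ j).eval x := by
  have h1 : (descPochhammer ℝ (j+1)).eval (x+1) = (x+1) * (descPochhammer ℝ j).eval x := by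
    rw [descPochhammer_succ_left]; simp
  rw [h1, descPochhammer_succ_eval]; ring

lemma dp_sum (j : ℕ) (c : ℝ) (b a : ℕ) (h : b ≤ a) :
    (descPochhammer ℝ (j+1)).eval (c + 1 - b) - (descPochhammer ℝ (j+1)).eval (c - a)
      = (j+1) * ∑ r ∈ Finset.Icc b a, (descPochhammer ℝ j).eval (c - r) := by
  induction a, h using Nat.le_induction with
  | base =>
    rw [Finset.Icc_self, Finset.sum_singleton, ← dp_diff]
    ring_nf
  | succ a h ih =>
    rw [← Finset.insert_Icc_right_eq_Icc_add_one (by omega), Finset.sum_insert (by simp), mul_add, ← ih, ← dp_diff]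
    push_cast
    ring_nf

lemma vdm_dp {n : ℕ} (v : Fin n → ℝ) : (Matrix.vandermonde v).det =
    (Matrix.of (fun i j : Fin n => (descPochhammer ℝ (j:ℕ)).eval (v i))).det :=
  Matrix.det_eval_matrixOfPolynomials_eq_det_vandermonde v (fun i => descPochhammer ℝ i)
      (fun i => descPochhammer_natDegree ℝ i) (fun i => monic_descPochhammer ℝ i)

lemma vdm_sum (q : ℕ) (l : ℕ → ℕ) (hl : ∀ i, l (i+1) ≤ l i) :
    (Matrix.vandermonde (fun i : Fin (q+1) => ((i:ℕ):ℝ) - l i)).det =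
    (Nat.factorial q : ℝ) * ∑ r ∈ Fintype.piFinset (fun i : Fin q => Finset.Icc (l (i+1)) (l i)),
      (Matrix.vandermonde (fun i : Fin q => ((i:ℕ):ℝ) - r i)).det := by
  simp only [vdm_dp]
  set p : ℕ → ℝ → ℝ := fun j x => (descPochhammer ℝ j).eval x with hp
  set x : ℕ → ℝ := fun i => (i:ℝ) - l i with hx
  let N : Matrix (Fin (q+1)) (Fin (q+1)) ℝ := Matrix.of fun i j =>
    Fin.cases (p j (x 0)) (fun i' : Fin q => p j (x (i'+1)) - p j (x i')) i
  have h1 : (Matrix.of (fun i j : Fin (q+1) => p j (x i))).det = N.det := by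
    apply Matrix.det_eq_of_forall_row_eq_smul_add_pred (fun _ => 1)
    · intro j; simp [N]
    · intro i j; simp [N]
  have h2 : N.det = (Matrix.of (fun i j : Fin q => p (j+1) (x (i+1)) - p (j+1) (x i))).det := by
    rw [Matrix.det_succ_column_zero, Fin.sum_univ_succ, Finset.sum_eq_zero]
    · simp [N, hp]
      congr 1
    · intro i _
      simp [N, hp]
  have h3 : (Matrix.of (fun i j : Fin q => p (j+1) (x (i+1)) - p (j+1) (x i))) =
     Matrix.of (fun i j : Fin q => (((j:ℕ):ℝ)+1) * (Matrix.of fun i j : Fin q =>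
        ∑ r ∈ Finset.Icc (l (i+1)) (l i), p j ((i:ℕ) - r)) i j) := by
    ext i j
    simp only [Matrix.of_apply, hp, hx]
    rw [← dp_sum _ _ _ _ (hl i)]
    push_cast
    rfl
  refine h1.trans ?_
  rw [h2, h3, Matrix.det_mul_row]
  congr 1
  · rw [← Finset.prod_range_add_one_eq_factorial, Finset.prod_range]; push_cast; rfl
  · have := (Matrix.detRowAlternating (n := Fin q) (R := ℝ)).toMultilinearMap.map_sum_finset
      (fun i (r : ℕ) => fun j : Fin q => p j ((i:ℕ) - r)) (fun i : Fin q => Finset.Icc (l (i+1)) (l i))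
    refine Eq.trans ?_ this
    change Matrix.det _ = Matrix.det _
    congr 1
    ext i j
    simp [Finset.sum_apply]

lemma prod_cells (μ : YoungDiagram) (q : ℕ) (hμ : μ.colLen 0 ≤ q) (f : ℕ × ℕ → ℝ) :
    ∏ c ∈ μ.cells, f c = ∏ i ∈ Finset.range q, ∏ j ∈ Finset.range (μ.rowLen i), f (i, j) := by
  apply Finset.prod_finset_product
  rintro ⟨i, j⟩
  simp only [YoungDiagram.mem_cells, Finset.mem_range, ← YoungDiagram.mem_iff_lt_rowLen]
  refine ⟨fun h => ⟨?_, h⟩, fun h => h.2⟩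
  have := YoungDiagram.mem_iff_lt_colLen.1 (μ.up_left_mem le_rfl (Nat.zero_le j) h)
  omega

lemma rowLen_zero (μ : YoungDiagram) (q : ℕ) (hμ : μ.colLen 0 ≤ q) : μ.rowLen q = 0 := by
  by_contra h
  have := YoungDiagram.mem_iff_lt_colLen.1 (YoungDiagram.mem_iff_lt_rowLen.2 (Nat.pos_of_ne_zero h))
  omega

lemma colLen_eq (μ : YoungDiagram) (m j : ℕ) (h1 : μ.rowLen (m+1) ≤ j) (h2 : j < μ.rowLen m) :
    μ.colLen j = m + 1 := by
  have a := YoungDiagram.mem_iff_lt_colLen.1 (YoungDiagram.mem_iff_lt_rowLen.2 h2)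
  have b : ¬ (m+1 < μ.colLen j) := by
    rw [← YoungDiagram.mem_iff_lt_colLen, YoungDiagram.mem_iff_lt_rowLen]; omega
  omega

lemma prod_fact (L m' b : ℕ) : ∀ a, a ≤ b → b ≤ L → 
    (L - b + m').factorial * ∏ j ∈ Finset.Ico a b, (L - j + m') = (L - a + m').factorial := by
  intro a hab hb
  induction hab using Nat.decreasingInduction with
  | self => simp
  | of_succ a h ih =>
    rw [← Finset.insert_Ico_add_one_left_eq_Ico (by omega), Finset.prod_insert (by simp), mul_left_comm, ih,
      show L - a + m' = (L - (a+1) + m') + 1 by omega, Nat.factorial_succ]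

lemma row_hook (μ : YoungDiagram) (i m : ℕ) (him : i ≤ m) :
    (∏ j ∈ Finset.Ico (μ.rowLen m) (μ.rowLen i), hookLen μ (i, j)) *
      ∏ k ∈ Finset.Ioc i m, (μ.rowLen i - μ.rowLen k + (k - i)) =
    (μ.rowLen i - μ.rowLen m + (m - i)).factorial := by
  induction m, him using Nat.le_induction with
  | base => simp
  | succ m h ih =>
    have h1 : μ.rowLen (m+1) ≤ μ.rowLen m := μ.rowLen_anti _ _ (by omega)
    have h2 : μ.rowLen m ≤ μ.rowLen i := μ.rowLen_anti _ _ (by omega)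
    rw [← Finset.prod_Ico_consecutive _ h1 h2, ← Finset.insert_Ioc_right_eq_Ioc_add_one (by omega),
      Finset.prod_insert (by simp)]
    have h3 : ∏ j ∈ Finset.Ico (μ.rowLen (m+1)) (μ.rowLen m), hookLen μ (i, j) =
        ∏ j ∈ Finset.Ico (μ.rowLen (m+1)) (μ.rowLen m), (μ.rowLen i - j + (m - i)) := by
      apply Finset.prod_congr rfl
      intro j hj
      rw [Finset.mem_Ico] at hj
      rw [hookLen, colLen_eq μ m j hj.1 hj.2]
      simp only
      omega
    have h4 := prod_fact (μ.rowLen i) (m-i) _ _ h1 h2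
    rw [h3, show μ.rowLen i - μ.rowLen (m+1) + (m+1-i) = (μ.rowLen i - μ.rowLen (m+1) + (m-i)) + 1 by omega,
      Nat.factorial_succ, ← h4, ← ih]
    ring

lemma content_row (q i L : ℕ) (h : i < q) :
    (∏ j ∈ Finset.range L, ((q:ℝ) + j - i)) * (q-1-i).factorial = ((L + (q-1-i)).factorial : ℝ) := by
  induction L with
  | zero => simp
  | succ L ih =>
    rw [Finset.prod_range_succ, mul_right_comm, ih, show L + 1 + (q-1-i) = (L + (q-1-i)) + 1 by omega,
      Nat.factorial_succ]
    have : ((q-1-i : ℕ):ℝ) = q - 1 - i := by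
      rw [Nat.cast_sub (by omega), Nat.cast_sub (by omega)]; simp
    push_cast
    rw [this]; ring

lemma hook_row_real (μ : YoungDiagram) (q i : ℕ) (h : i < q) (hμ : μ.colLen 0 ≤ q) :
    (∏ j ∈ Finset.range (μ.rowLen i), (hookLen μ (i, j) : ℝ)) *
      ∏ k ∈ Finset.Ioo i q, (((k:ℝ) - μ.rowLen k) - ((i:ℝ) - μ.rowLen i)) =
    ((μ.rowLen i + (q-1-i)).factorial : ℝ) := by
  have h1 := row_hook μ i q h.le
  rw [← Finset.Ioo_insert_right h, Finset.prod_insert (by simp), rowLen_zero μ q hμ,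
    show μ.rowLen i - 0 + (q - i) = (μ.rowLen i + (q-1-i)) + 1 by omega, Nat.factorial_succ,
    mul_left_comm] at h1
  have h2 := Nat.eq_of_mul_eq_mul_left (by omega) h1
  rw [← h2, ← Finset.range_eq_Ico]
  push_cast
  congr 1
  apply Finset.prod_congr rfl
  intro k hk
  rw [Finset.mem_Ioo] at hk
  rw [Nat.cast_sub (μ.rowLen_anti _ _ hk.1.le), Nat.cast_sub hk.1.le]
  ring

lemma vdm_range (μ : YoungDiagram) (q : ℕ) :
    (Matrix.vandermonde (fun i : Fin q => ((i:ℕ):ℝ) - μ.rowLen i)).det =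
    ∏ i ∈ Finset.range q, ∏ k ∈ Finset.Ioo i q, (((k:ℝ) - μ.rowLen k) - ((i:ℝ) - μ.rowLen i)) := by
  rw [Matrix.det_vandermonde, Finset.prod_range]
  refine Finset.prod_congr rfl fun i _ => ?_
  rw [← Fin.map_valEmbedding_Ioi, Finset.prod_map]
  rfl

lemma content_hook (μ : YoungDiagram) (q : ℕ) (hμ : μ.colLen 0 ≤ q) :
    (∏ c ∈ μ.cells, ((q:ℝ) + c.2 - c.1)) * ∏ k ∈ Finset.range q, (k.factorial : ℝ) =
    (∏ c ∈ μ.cells, (hookLen μ c : ℝ)) *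
      (Matrix.vandermonde (fun i : Fin q => ((i:ℕ):ℝ) - μ.rowLen i)).det := by
  rw [prod_cells μ q hμ, prod_cells μ q hμ, vdm_range,
    ← Finset.prod_range_reflect (fun k => (k.factorial : ℝ)),
    ← Finset.prod_mul_distrib, ← Finset.prod_mul_distrib]
  refine Finset.prod_congr rfl fun i hi => ?_
  rw [Finset.mem_range] at hi
  rw [hook_row_real μ q i hi hμ]
  exact content_row q i _ hi

def bdd (μ : YoungDiagram) (q : ℕ) : Set (SemistandardYoungTableau μ) :=
  {T : SemistandardYoungTableau μ | ∀ c ∈ μ.cells, T c.1 c.2 < q}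

lemma bdd_finite (μ : YoungDiagram) (q : ℕ) : (bdd μ q).Finite := by
  let F : bdd μ q → (μ.cells → Fin q) := fun T c => ⟨T.1 c.1.1 c.1.2, T.2 c.1 c.2⟩
  have : Function.Injective F := by
    intro T T' h
    apply Subtype.ext
    ext i j
    by_cases hc : (i, j) ∈ μ
    · have := congrFun h ⟨(i, j), (YoungDiagram.mem_cells _).2 hc⟩
      simpa [F] using this
    · rw [T.1.zeros hc, T'.1.zeros hc]
  have := Finite.of_injective F this
  exact Set.toFinite _

/-- the subdiagram of cells with entries less than `q` -/
def shp {μ : YoungDiagram} (q : ℕ) (T : SemistandardYoungTableau μ) : YoungDiagram where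
  cells := μ.cells.filter (fun c => T c.1 c.2 < q)
  isLowerSet := by
    rintro ⟨a, b⟩ ⟨c, d⟩ hle h
    obtain ⟨h1, h2⟩ := Prod.mk_le_mk.1 hle
    simp only [Finset.coe_filter, Set.mem_ofPred_eq, YoungDiagram.mem_cells] at h ⊢
    refine ⟨μ.up_left_mem h1 h2 h.1, ?_⟩
    have h3 := T.row_weak_of_le h2 h.1
    have h4 := T.col_weak h1 (μ.up_left_mem le_rfl h2 h.1)
    omega

lemma mem_shp {μ : YoungDiagram} (q : ℕ) (T : SemistandardYoungTableau μ) (i j : ℕ) :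
    (i, j) ∈ shp q T ↔ (i, j) ∈ μ ∧ T i j < q := by
  rw [← YoungDiagram.mem_cells]
  simp [shp]

/-- subdiagram with given row lengths -/
def sub (μ : YoungDiagram) (q : ℕ) (r : Fin q → ℕ)
    (hr : r ∈ Fintype.piFinset (fun i : Fin q => Finset.Icc (μ.rowLen (i+1)) (μ.rowLen i))) :
    YoungDiagram where
  cells := μ.cells.filter (fun c => ∃ h : c.1 < q, c.2 < r ⟨c.1, h⟩)
  isLowerSet := by
    rintro ⟨a, b⟩ ⟨c, d⟩ hle h
    obtain ⟨h1, h2⟩ := Prod.mk_le_mk.1 hle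
    simp only [Finset.coe_filter, Set.mem_ofPred_eq, YoungDiagram.mem_cells] at h ⊢
    refine ⟨μ.up_left_mem h1 h2 h.1, ?_⟩
    obtain ⟨h0, h3, h4⟩ := h
    have hcq : c < q := by omega
    refine ⟨hcq, ?_⟩
    rcases h1.eq_or_lt with rfl | h1
    · omega
    · simp only [Fintype.mem_piFinset, Finset.mem_Icc] at hr
      have e1 := (hr ⟨c, hcq⟩).1
      have e2 := μ.rowLen_anti (c+1) a h1
      have e3 := YoungDiagram.mem_iff_lt_rowLen.1 h0
      simp only at e1
      omega

lemma mem_sub {μ : YoungDiagram} {q : ℕ} {r : Fin q → ℕ}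
    (hr : r ∈ Fintype.piFinset (fun i : Fin q => Finset.Icc (μ.rowLen (i+1)) (μ.rowLen i)))
    (i j : ℕ) : (i, j) ∈ sub μ q r hr ↔ ∃ h : i < q, j < r ⟨i, h⟩ := by
  rw [← YoungDiagram.mem_cells]
  simp only [sub, Finset.mem_filter, YoungDiagram.mem_cells, and_iff_right_iff_imp]
  rintro ⟨h, h'⟩
  simp only [Fintype.mem_piFinset, Finset.mem_Icc] at hr
  have := (hr ⟨i, h⟩).2
  rw [YoungDiagram.mem_iff_lt_rowLen]
  simp only at this
  omega

lemma rowLen_eq_of {ν : YoungDiagram} {i n : ℕ} (h : ∀ j, (i, j) ∈ ν ↔ j < n) : ν.rowLen i = n := by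
  have h1 := h n
  have h2 := h (ν.rowLen i)
  rw [YoungDiagram.mem_iff_lt_rowLen] at h1 h2
  omega

lemma le_entry {μ : YoungDiagram} (T : SemistandardYoungTableau μ) : ∀ i j, (i, j) ∈ μ → i ≤ T i j := by
  intro i
  induction i with
  | zero => intros; omega
  | succ i ih =>
    intro j h
    have := ih j (μ.up_left_mem (Nat.le_succ i) le_rfl h)
    have := T.col_strict (Nat.lt_add_one i) h
    omega

lemma sub_le {μ : YoungDiagram} {q : ℕ} {r : Fin q → ℕ}
    (hr : r ∈ Fintype.piFinset (fun i : Fin q => Finset.Icc (μ.rowLen (i+1)) (μ.rowLen i)))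
    {i j : ℕ} (h : (i, j) ∈ sub μ q r hr) : (i, j) ∈ μ := by
  rw [← YoungDiagram.mem_cells] at h ⊢
  exact (Finset.mem_filter.1 h).1

lemma fiber (μ : YoungDiagram) (q : ℕ) (hμ : μ.colLen 0 ≤ q + 1) (r : Fin q → ℕ)
    (hr : r ∈ Fintype.piFinset (fun i : Fin q => Finset.Icc (μ.rowLen (i+1)) (μ.rowLen i))) :
    {T ∈ bdd μ (q+1) | (fun i : Fin q => (shp q T).rowLen i) = r}.ncard =
      numSSYT (sub μ q r hr) q := by
  have key : ∀ T : SemistandardYoungTableau μ, (fun i : Fin q => (shp q T).rowLen i) = r →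
      ∀ i j, (i, j) ∈ sub μ q r hr ↔ (i, j) ∈ μ ∧ T i j < q := by
    intro T h i j
    rw [mem_sub, ← mem_shp, YoungDiagram.mem_iff_lt_rowLen]
    subst h
    simp only [exists_prop, and_iff_right_iff_imp]
    intro h
    have h1 := (mem_shp q T i j).1 (YoungDiagram.mem_iff_lt_rowLen.2 h)
    have := le_entry T i j h1.1
    omega
  refine Set.ncard_congr (fun T _ => 
    { entry := fun i j => if (i, j) ∈ sub μ q r hr then T i j else 0
      row_weak' := ?_
      col_strict' := ?_
      zeros' := ?_ }) ?_ ?_ ?_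
  · intro i j1 j2 hj h
    rw [if_pos h, if_pos (YoungDiagram.up_left_mem _ le_rfl hj.le h)]
    exact T.row_weak hj (sub_le hr h)
  · intro i j1 j2 hj h
    rw [if_pos h, if_pos (YoungDiagram.up_left_mem _ hj.le le_rfl h)]
    exact T.col_strict hj (sub_le hr h)
  · intro i j h
    rw [if_neg h]
  · rintro T ⟨hT, h⟩ ⟨i, j⟩ hc
    rw [YoungDiagram.mem_cells] at hc
    change (if _ then _ else _) < q
    rw [if_pos hc]
    exact ((key T h i j).1 hc).2
  · rintro T T' ⟨hT, h⟩ ⟨hT', h'⟩ heq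
    ext i j
    have h1 := congrFun (congrFun (congrArg SemistandardYoungTableau.entry heq) i) j
    simp only at h1
    by_cases hs : (i, j) ∈ sub μ q r hr
    · rwa [if_pos hs, if_pos hs] at h1
    · by_cases hc : (i, j) ∈ μ
      · have a := hT (i, j) ((YoungDiagram.mem_cells _).2 hc)
        have a' := hT' (i, j) ((YoungDiagram.mem_cells _).2 hc)
        have b := (key T h i j).not.1 hs
        have b' := (key T' h' i j).not.1 hs
        simp only [hc, true_and, not_lt] at a a' b b'
        omega
      · rw [T.zeros hc, T'.zeros hc]
  · intro S hS
    have hS' : ∀ i j, (i, j) ∈ sub μ q r hr → S i j < q := fun i j h =>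
      hS (i, j) ((YoungDiagram.mem_cells _).2 h)
    have hr' := hr
    simp only [Fintype.mem_piFinset, Finset.mem_Icc] at hr'
    have up : ∀ i j, (i+1, j) ∈ μ → (i, j) ∈ sub μ q r hr := by
      intro i j h
      rw [mem_sub]
      have h1 := YoungDiagram.mem_iff_lt_colLen.1 (μ.up_left_mem le_rfl (Nat.zero_le j) h)
      have hi : i < q := by omega
      have h2 := (hr' ⟨i, hi⟩).1
      have h3 := YoungDiagram.mem_iff_lt_rowLen.1 h
      simp only at h2
      exact ⟨hi, by omega⟩
    let T : SemistandardYoungTableau μ :=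
      { entry := fun i j => if (i, j) ∈ sub μ q r hr then S i j else if (i, j) ∈ μ then q else 0
        row_weak' := by
          intro i j1 j2 hj h
          by_cases h2 : (i, j2) ∈ sub μ q r hr
          · rw [if_pos h2, if_pos (YoungDiagram.up_left_mem _ le_rfl hj.le h2)]
            exact S.row_weak hj h2
          · rw [if_neg h2, if_pos h]
            split_ifs with h3 h4
            · exact (hS' _ _ h3).le
            · exact le_rfl
            · omega
        col_strict' := by
          intro i1 i2 j hi h
          have h1 : (i1, j) ∈ sub μ q r hr := up _ _ (μ.up_left_mem hi le_rfl h)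
          rw [if_pos h1]
          by_cases h2 : (i2, j) ∈ sub μ q r hr
          · rw [if_pos h2]
            exact S.col_strict hi h2
          · rw [if_neg h2, if_pos h]
            exact hS' _ _ h1
        zeros' := by
          intro i j h
          rw [if_neg (fun h' => h (sub_le hr h')), if_neg h] }
    have Tv : ∀ i j, T i j = if (i, j) ∈ sub μ q r hr then S i j else if (i, j) ∈ μ then q else 0 :=
      fun _ _ => rfl
    refine ⟨T, ⟨?_, ?_⟩, ?_⟩
    · rintro ⟨i, j⟩ hc
      rw [YoungDiagram.mem_cells] at hc
      simp only [Tv, hc, if_true]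
      split_ifs with h
      · have := hS' _ _ h
        omega
      · omega
    · funext i
      apply rowLen_eq_of
      intro j
      rw [mem_shp, Tv]
      have hm := mem_sub hr i j
      simp only [i.2, exists_true_left] at hm
      rw [← hm]
      constructor
      · rintro ⟨h1, h2⟩
        by_contra h3
        rw [if_neg h3, if_pos h1] at h2
        omega
      · intro h
        rw [if_pos h]
        exact ⟨sub_le hr h, hS' _ _ h⟩
    · ext i j
      change (if _ then T i j else 0) = S i j
      rw [Tv]
      split_ifs with h
      · rfl
      · exact (S.zeros h).symm

lemma branching (μ : YoungDiagram) (q : ℕ) (hμ : μ.colLen 0 ≤ q + 1) :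
    numSSYT μ (q+1) =
      ∑ r ∈ (Fintype.piFinset (fun i : Fin q => Finset.Icc (μ.rowLen (i+1)) (μ.rowLen i))).attach,
        numSSYT (sub μ q r.1 r.2) q := by
  classical
  have hfin := bdd_finite μ (q+1)
  change (bdd μ (q+1)).ncard = _
  rw [Set.ncard_eq_toFinset_card _ hfin,
    Finset.card_eq_sum_card_fiberwise (f := fun T => fun i : Fin q => (shp q T).rowLen i)
    (t := Fintype.piFinset (fun i : Fin q => Finset.Icc (μ.rowLen (i+1)) (μ.rowLen i))),
    ← Finset.sum_attach]
  · refine Finset.sum_congr rfl fun r _ => ?_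
    rw [← fiber μ q hμ r.1 r.2, ← Set.ncard_coe_finset]
    congr 1
    ext T
    simp
  · intro T hT
    have hT' : T ∈ bdd μ (q+1) := by simpa using hT
    simp only [Finset.mem_coe, Fintype.mem_piFinset, Finset.mem_Icc]
    intro i
    constructor
    · by_contra! h
      have h1 : ((i:ℕ)+1, (shp q T).rowLen i) ∈ μ := YoungDiagram.mem_iff_lt_rowLen.2 h
      have h2 := T.col_strict (Nat.lt_add_one (i:ℕ)) h1
      have h3 := hT' _ ((YoungDiagram.mem_cells _).2 h1)
      have h4 : ((i:ℕ), (shp q T).rowLen i) ∈ shp q T :=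
        (mem_shp _ _ _ _).2 ⟨μ.up_left_mem (Nat.le_succ _) le_rfl h1, by simp only at h3; omega⟩
      rw [YoungDiagram.mem_iff_lt_rowLen] at h4
      omega
    · by_contra! h
      have h4 := ((mem_shp _ _ _ _).1 (YoungDiagram.mem_iff_lt_rowLen.2 h)).1
      rw [YoungDiagram.mem_iff_lt_rowLen] at h4
      omega

lemma colLen_sub (μ : YoungDiagram) (q : ℕ) (r : Fin q → ℕ)
    (hr : r ∈ Fintype.piFinset (fun i : Fin q => Finset.Icc (μ.rowLen (i+1)) (μ.rowLen i))) :
    (sub μ q r hr).colLen 0 ≤ q := by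
  by_contra! h
  obtain ⟨h, _⟩ := (mem_sub hr _ _).1 (YoungDiagram.mem_iff_lt_colLen.2 h)
  omega

lemma rowLen_sub (μ : YoungDiagram) (q : ℕ) (r : Fin q → ℕ)
    (hr : r ∈ Fintype.piFinset (fun i : Fin q => Finset.Icc (μ.rowLen (i+1)) (μ.rowLen i)))
    (i : Fin q) : (sub μ q r hr).rowLen i = r i := by
  apply rowLen_eq_of
  intro j
  rw [mem_sub]
  simp

lemma count (q : ℕ) : ∀ μ : YoungDiagram, μ.colLen 0 ≤ q →
    (numSSYT μ q : ℝ) * ∏ k ∈ Finset.range q, (k.factorial : ℝ) =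
      (Matrix.vandermonde (fun i : Fin q => ((i:ℕ):ℝ) - μ.rowLen i)).det := by
  induction q with
  | zero =>
    intro μ hμ
    have hno : ∀ i j, (i, j) ∉ μ := by
      intro i j h
      have := YoungDiagram.mem_iff_lt_colLen.1 (μ.up_left_mem le_rfl (Nat.zero_le j) h)
      omega
    have : numSSYT μ 0 = 1 := by
      rw [numSSYT, Set.ncard_eq_one]
      refine ⟨default, ?_⟩
      ext T
      simp only [Set.mem_ofPred_eq, Set.mem_singleton_iff]
      constructor
      · intro _
        ext i j
        rw [T.zeros (hno i j), SemistandardYoungTableau.zeros _ (hno i j)]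
      · rintro _ ⟨i, j⟩ h
        exact absurd ((YoungDiagram.mem_cells _).1 h) (hno i j)
    simp [this]
  | succ q ih =>
    intro μ hμ
    rw [vdm_sum q μ.rowLen (fun i => μ.rowLen_anti _ _ (Nat.le_succ i)), ← Finset.sum_attach, Finset.prod_range_succ,
      branching μ q hμ, mul_comm _ (q.factorial : ℝ), mul_left_comm]
    congr 1
    push_cast
    rw [Finset.sum_mul]
    refine Finset.sum_congr rfl fun r _ => ?_
    rw [ih _ (colLen_sub μ q r.1 r.2)]
    simp only [rowLen_sub]

/-- the hook content formula.  For a partition `λ` with at most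
`q` parts, the number of semistandard Young tableaux of shape `λ` with entries
from an alphabet of size `q` equals `∏_{(i,j)∈λ} (q + j − i)/h^λ_{ij} = (q)_λ/h^λ`. -/
theorem statement18 (q : ℕ) (hq : 1 ≤ q) (μ : YoungDiagram) (hμ : μ.colLen 0 ≤ q) :
    (numSSYT μ q : ℝ) =
      ∏ c ∈ μ.cells, (((q : ℝ) + c.2 - c.1) / (hookLen μ c : ℝ)) ∧
    (numSSYT μ q : ℝ) = pochPart (q : ℝ) μ / (hookProd μ : ℝ) := by
  have hh : (∏ c ∈ μ.cells, (hookLen μ c : ℝ)) ≠ 0 := by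
    rw [Finset.prod_ne_zero_iff]
    rintro ⟨i, j⟩ hc
    rw [YoungDiagram.mem_cells] at hc
    have h1 := YoungDiagram.mem_iff_lt_rowLen.1 hc
    have h2 := YoungDiagram.mem_iff_lt_colLen.1 hc
    rw [Nat.cast_ne_zero, hookLen]
    simp only
    omega
  have hf : (∏ k ∈ Finset.range q, (k.factorial : ℝ)) ≠ 0 :=
    Finset.prod_ne_zero_iff.2 fun k _ => Nat.cast_ne_zero.2 k.factorial_ne_zero
  have main : (numSSYT μ q : ℝ) = (∏ c ∈ μ.cells, ((q : ℝ) + c.2 - c.1)) /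
      ∏ c ∈ μ.cells, (hookLen μ c : ℝ) := by
    rw [eq_div_iff hh]
    apply mul_right_cancel₀ hf
    rw [content_hook μ q hμ, ← count q μ hμ]
    ring
  refine ⟨by rw [main, Finset.prod_div_distrib], ?_⟩
  rw [main, hookProd, Nat.cast_prod, prod_cells μ _ le_rfl (fun c => (q : ℝ) + c.2 - c.1)]
  congr 1
  rw [pochPart]
  refine Finset.prod_congr rfl fun i _ => Finset.prod_congr rfl fun j _ => ?_
  simp only
  ring

end
end
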